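/- Let p and q6 be distinct odd prime numbers and let d1 be a positive odd integer. Then there is at most one pair of positive integers (x, y) satisfying d1·x^2 + 4·q6^2 = p^y. -/

import Mathlib

/-!
In `ℤ√(-d)` a solution of `d x² + 4 q² = p ^ y` is an element `2q + x√(-d)` of norm `p ^ y` with
real part prime to `p`. Up to conjugation all such elements are units times powers of a single
`α`, so solutions correspond to odd exponents `n` with `re (α ^ n) = ± 2q`. If `m` and `n` are two
such exponents and `g = gcd m n`, then `re (α ^ g)` is `± 2q` as well: it divides `2q`, and it is
divisible by `2` because `g` is odd and by `q` because `-1 = (α / star α) ^ m = (α / star α) ^ n`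
modulo `q` gives `(α / star α) ^ g = -1`. So it has to be shown for `β = 2q + √(-B)` that
`re (β ^ t) ∣ 2q` with `t` odd forces `t = 1`, and one may assume that `t = r` is prime.

The value `re (β ^ r) = -2q` contradicts Fermat's little theorem. If `re (β ^ r) = 2q` with
`r = 2m + 1`, then `m` is odd by a comparison of `2`-adic valuations, and `m = 1` is elementary.
For `r = 4n + 3` with `n ≥ 1`, the relations between `β ^ (2n + 1)` and `β ^ r` say that, with `N`
the norm of `β`, an explicit `(B + √(NB)) w ^ 4` is congruent to its conjugate modulo
`N ^ (2n + 1)`. Inserting `w` into a diagonal Padé approximation of `((1 + x) / (1 - x)) ^ (1/4)`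
gives a nonzero integer divisible by a power of `N` that is too large for it unless `N < 8192`.
For each of these finitely many `β` a congruence modulo a small prime excludes all exponents
`4n + 3` at once.
-/

open Finset

/-! ### Padé approximation of a fourth root -/

theorem two_pow_dvd_factorial_imp_le {v j : ℕ} (h : 2 ^ v ∣ j.factorial) : v ≤ j := by
  rcases Nat.eq_zero_or_pos j with rfl | hj
  · rw [Nat.factorial_zero, Nat.dvd_one, Nat.pow_eq_one] at h
    omega
  · have hlt := (pow_dvd_iff_le_emultiplicity.mp h).trans_lt
      (Nat.emultiplicity_two_factorial_lt hj.ne')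
    exact_mod_cast hlt.le

theorem dvd_prod_sub_mul_of_dvd_factorial {o m : ℤ} {j : ℕ} (ho : o ∣ j.factorial)
    (hco : IsCoprime m o) (u : ℤ) : o ∣ ∏ l ∈ range j, (u - m * l) := by
  obtain ⟨c, s, hcs⟩ := hco
  -- Modulo `o` the number `m` has inverse `c`, so the product is `(-m) ^ j ∏ (l - c u)`.
  have hmod : ∏ l ∈ range j, (u - m * l) ≡ ∏ l ∈ range j, (-m) * (-(c * u) + l) [ZMOD o] := by
    refine Int.ModEq.prod fun l _ => Int.modEq_iff_dvd.mpr ⟨-(s * u), ?_⟩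
    linear_combination u * hcs
  rw [prod_mul_distrib] at hmod
  refine Int.modEq_zero_iff_dvd.mp (hmod.trans (Int.modEq_zero_iff_dvd.mpr ?_))
  exact (ho.trans (Nat.factorial_coe_dvd_prod j (-(c * u)))).mul_left _

theorem factorial_dvd_two_pow_mul_prod (u : ℤ) (j : ℕ) :
    (j.factorial : ℤ) ∣ 2 ^ j * ∏ l ∈ range j, (u - 4 * l) := by
  obtain ⟨v, o, ho, hj⟩ := Nat.exists_eq_two_pow_mul_odd (Nat.factorial_ne_zero j)
  have hv : v ≤ j := two_pow_dvd_factorial_imp_le ⟨o, hj⟩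
  have hco : IsCoprime (4 : ℤ) o := by
    exact_mod_cast Nat.isCoprime_iff_coprime.mpr
      (Nat.Coprime.pow_left 2 (Nat.coprime_two_left.mpr ho))
  have hod : (o : ℤ) ∣ j.factorial := by exact_mod_cast Dvd.intro_left _ hj.symm
  rw [hj, Nat.cast_mul, Nat.cast_pow, Nat.cast_ofNat]
  exact mul_dvd_mul (pow_dvd_pow 2 hv) (dvd_prod_sub_mul_of_dvd_factorial hod hco u)

/-- The integer `8 ^ j * binom (u / 4) j`, written without denominators. The division is exact by
`factorial_dvd_two_pow_mul_prod`. -/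
def scaledChoose (u : ℤ) (j : ℕ) : ℤ := 2 ^ j * (∏ l ∈ range j, (u - 4 * l)) / j.factorial

theorem scaledChoose_mul_factorial (u : ℤ) (j : ℕ) :
    scaledChoose u j * j.factorial = 2 ^ j * ∏ l ∈ range j, (u - 4 * l) :=
  Int.ediv_mul_cancel (factorial_dvd_two_pow_mul_prod u j)

theorem scaledChoose_zero (u : ℤ) : scaledChoose u 0 = 1 := by simp [scaledChoose]

theorem scaledChoose_succ (u : ℤ) (j : ℕ) :
    scaledChoose u (j + 1) * (j + 1) = 2 * (u - 4 * j) * scaledChoose u j := by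
  have hj := scaledChoose_mul_factorial u j
  have hsucc := scaledChoose_mul_factorial u (j + 1)
  rw [prod_range_succ, Nat.factorial_succ] at hsucc
  push_cast at hsucc
  apply mul_right_cancel₀ (Int.natCast_ne_zero.mpr j.factorial_ne_zero)
  linear_combination hsucc - 2 * (u - 4 * j) * hj

theorem scaledChoose_one (u : ℤ) : scaledChoose u 1 = 2 * u := by
  simpa [scaledChoose_zero] using scaledChoose_succ u 0

/-- The coefficient `8 ^ k * binom (k - 1/4) i * binom (k + 1/4) j`, where `k = i + j`. -/
def padeCoeff (ij : ℕ × ℕ) : ℤ :=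
  scaledChoose (4 * (ij.1 + ij.2) - 1) ij.1 * scaledChoose (4 * (ij.1 + ij.2) + 1) ij.2

/-- The homogeneous polynomial `8 ^ k ∑ binom (k - 1/4) i * binom (k + 1/4) j * a ^ i * b ^ j`,
summed over `i + j = k`. For `(a, b) = (1 - x, 1 + x)` and `(1 + x, 1 - x)` it gives the denominator
and the numerator of the diagonal Padé approximant of `((1 + x) / (1 - x)) ^ (1/4)`, see
`X_pow_dvd_padeRemainder`. -/
def padePoly {R : Type*} [CommRing R] (k : ℕ) (a b : R) : R :=
  ∑ ij ∈ antidiagonal k, (padeCoeff ij : R) * (a ^ ij.1 * b ^ ij.2)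

theorem padePoly_zero {R : Type*} [CommRing R] (a b : R) : padePoly 0 a b = 1 := by
  simp [padePoly, padeCoeff, scaledChoose_zero]

theorem padePoly_one {R : Type*} [CommRing R] (a b : R) : padePoly 1 a b = 6 * a + 10 * b := by
  rw [padePoly, Finset.Nat.sum_antidiagonal_succ, Finset.Nat.antidiagonal_zero, sum_singleton]
  simp only [padeCoeff, zero_add, Nat.cast_zero, Nat.cast_one, scaledChoose_zero, scaledChoose_one]
  push_cast
  ring

/-- The coefficient `1 / ((1 + ν) (2 + ν) ⋯ (n + ν) n!)` of the Bessel-type series `₀F₁(1 + ν)`. -/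
def besselCoeff (ν : ℚ) : ℕ → ℚ
  | 0 => 1
  | n + 1 => besselCoeff ν n / ((n + 1) * (n + 1 + ν))

/-- The coefficient of `T ^ k` in `₀F₁(1 + ν; a T) * ₀F₁(1 - ν; b T)`, each term being weighted by a
function `w` of its two indices, so that multiplication by `a` or by `b` becomes a change of
weight. -/
def besselSum {R : Type*} [CommRing R] [Algebra ℚ R] (ν : ℚ) (a b : R) (k : ℕ)
    (w : ℚ → ℚ → ℚ) : R :=
  ∑ ij ∈ antidiagonal k,
    (w ij.1 ij.2 * besselCoeff ν ij.1 * besselCoeff (-ν) ij.2) • (a ^ ij.1 * b ^ ij.2)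

section BesselSum

variable {R : Type*} [CommRing R] [Algebra ℚ R] {ν : ℚ} (a b : R)

theorem left_mul_besselSum (hν : ∀ n : ℕ, (n : ℚ) + 1 + ν ≠ 0) (k : ℕ) (w : ℚ → ℚ → ℚ) :
    a * besselSum ν a b k w = besselSum ν a b (k + 1) fun i j => i * (i + ν) * w (i - 1) j := by
  unfold besselSum
  rw [Finset.Nat.sum_antidiagonal_succ, mul_sum]
  simp only [Nat.cast_zero, zero_mul, zero_smul, zero_add]
  refine sum_congr rfl fun ij _ => ?_
  rw [mul_smul_comm, ← mul_assoc, ← pow_succ']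
  congr 1
  have hi : (ij.1 : ℚ) + 1 ≠ 0 := by positivity
  have hiν := hν ij.1
  simp only [besselCoeff]
  push_cast
  rw [add_sub_cancel_right]
  field_simp

theorem right_mul_besselSum (hν : ∀ n : ℕ, (n : ℚ) + 1 - ν ≠ 0) (k : ℕ) (w : ℚ → ℚ → ℚ) :
    b * besselSum ν a b k w = besselSum ν a b (k + 1) fun i j => j * (j - ν) * w i (j - 1) := by
  unfold besselSum
  rw [Finset.Nat.sum_antidiagonal_succ', mul_sum]
  simp only [Nat.cast_zero, zero_mul, zero_smul, zero_add]
  refine sum_congr rfl fun ij _ => ?_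
  rw [mul_smul_comm, mul_left_comm, ← pow_succ']
  congr 1
  have hj : (ij.2 : ℚ) + 1 ≠ 0 := by positivity
  have hjν := hν ij.2
  simp only [besselCoeff, ← sub_eq_add_neg]
  push_cast
  rw [add_sub_cancel_right]
  field_simp

theorem besselSum_congr {k : ℕ} {w w' : ℚ → ℚ → ℚ} (h : ∀ i j : ℚ, i + j = k → w i j = w' i j) :
    besselSum ν a b k w = besselSum ν a b k w' := by
  refine sum_congr rfl fun ij hij => ?_
  rw [h]
  exact_mod_cast HasAntidiagonal.mem_antidiagonal.mp hij

theorem besselSum_add (k : ℕ) (w w' : ℚ → ℚ → ℚ) :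
    besselSum ν a b k w + besselSum ν a b k w' =
      besselSum ν a b k fun i j => w i j + w' i j := by
  simp only [besselSum, ← sum_add_distrib, ← add_smul, add_mul]

theorem smul_besselSum (k : ℕ) (r : ℚ) (w : ℚ → ℚ → ℚ) :
    r • besselSum ν a b k w = besselSum ν a b k fun i j => r * w i j := by
  simp only [besselSum, smul_sum, smul_smul, mul_assoc]

theorem besselSum_one_recurrence (hν : ∀ n : ℕ, (n : ℚ) + 1 + ν ≠ 0)
    (hν' : ∀ n : ℕ, (n : ℚ) + 1 - ν ≠ 0) (k : ℕ) :
    ((k + 1) * (k + 2) * ((k + 2) ^ 2 - ν ^ 2) : ℚ) • besselSum ν a b (k + 2) (fun _ _ => 1) +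
      (b - a) ^ 2 * besselSum ν a b k (fun _ _ => 1) =
      ((k + 1) * (2 * k + 3) : ℚ) • ((a + b) * besselSum ν a b (k + 1) (fun _ _ => 1)) := by
  have hexpand (S : R) : (b - a) ^ 2 * S =
      b * (b * S) + (-2 : ℚ) • (a * (b * S)) + a * (a * S) := by
    rw [Algebra.smul_def, map_neg, map_ofNat]
    ring
  rw [hexpand, add_mul a b]
  simp only [left_mul_besselSum a b hν, right_mul_besselSum a b hν', besselSum_add, smul_besselSum]
  apply besselSum_congr
  intro i j h
  push_cast at h
  obtain rfl : j = k + 2 - i := by linarith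
  ring

end BesselSum

theorem besselCoeff_mul_factorial_mul_prod {ν : ℚ} (hν : ∀ n : ℕ, (n : ℚ) + 1 + ν ≠ 0) (i : ℕ) :
    besselCoeff ν i * i.factorial * ∏ l ∈ range i, ((l : ℚ) + 1 + ν) = 1 := by
  induction i with
  | zero => simp [besselCoeff]
  | succ n ih =>
    rw [prod_range_succ, Nat.factorial_succ, besselCoeff]
    have hn : (n : ℚ) + 1 ≠ 0 := by positivity
    have hnν := hν n
    push_cast
    refine Eq.trans ?_ ih
    field_simp

theorem prod_sub_four_mul_reflect (x : ℚ) (j : ℕ) :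
    ∏ l ∈ range j, (4 * (x + j) - 4 * l) = 4 ^ j * ∏ l ∈ range j, (x + l + 1) := by
  rw [← prod_range_reflect, show (4 : ℚ) ^ j = ∏ _l ∈ range j, 4 by simp, ← prod_mul_distrib]
  refine prod_congr rfl fun l hl => ?_
  have := mem_range.mp hl
  rw [Nat.sub_sub, Nat.cast_sub (by omega)]
  push_cast
  ring

theorem scaledChoose_add_mul_factorial (i j : ℕ) {s : ℤ} {ν : ℚ} (hν : 4 * ν = s)
    (hν' : ∀ n : ℕ, (n : ℚ) + 1 + ν ≠ 0) :
    (scaledChoose (4 * (i + j) + s) j : ℚ) * j.factorial =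
      8 ^ j * (∏ l ∈ range (i + j), (l + 1 + ν)) * (besselCoeff ν i * i.factorial) := by
  have hcast := congrArg (Int.cast (R := ℚ)) (scaledChoose_mul_factorial (4 * (i + j) + s) j)
  have hreflect := prod_sub_four_mul_reflect (i + ν) j
  push_cast at hcast
  rw [hcast, ← hν, prod_range_add, show (8 : ℚ) = 2 * 4 by norm_num, mul_pow]
  push_cast
  calc (2 : ℚ) ^ j * ∏ l ∈ range j, (4 * ((i : ℚ) + j) + 4 * ν - 4 * l)
      = 2 ^ j * (4 ^ j * ∏ l ∈ range j, (i + ν + l + 1)) := by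
        rw [← hreflect]; congr 1; exact prod_congr rfl fun l _ => by ring
    _ = 2 ^ j * (4 ^ j * ∏ l ∈ range j, (i + l + 1 + ν)) := by
        congr 2; exact prod_congr rfl fun l _ => by ring
    _ = _ := by
        linear_combination (-(2 ^ j * 4 ^ j * ∏ l ∈ range j, ((i : ℚ) + l + 1 + ν))) *
          besselCoeff_mul_factorial_mul_prod hν' i

/-- The rational factor relating `padePoly` to the product of Bessel-type series of orders
`± 1/4`. -/
def padeScale (k : ℕ) : ℚ :=
  8 ^ k * ((∏ l ∈ range k, ((l : ℚ) + 1 + 1 / 4)) * ∏ l ∈ range k, ((l : ℚ) + 1 + -(1 / 4)))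

theorem padeScale_succ (k : ℕ) :
    padeScale (k + 1) = 8 * ((k + 1) ^ 2 - (1 / 4) ^ 2) * padeScale k := by
  simp only [padeScale, prod_range_succ]
  ring

theorem natCast_add_one_add_quarter_ne_zero (n : ℕ) : (n : ℚ) + 1 + 1 / 4 ≠ 0 := by positivity

theorem natCast_add_one_sub_quarter_ne_zero (n : ℕ) : (n : ℚ) + 1 - 1 / 4 ≠ 0 := by
  have : (0 : ℚ) ≤ n := n.cast_nonneg
  linarith

theorem padeCoeff_eq_padeScale_mul (i j : ℕ) :
    (padeCoeff (i, j) : ℚ) =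
      padeScale (i + j) * (1 * besselCoeff (1 / 4) i * besselCoeff (-(1 / 4)) j) := by
  have hj := scaledChoose_add_mul_factorial i j (s := 1) (by norm_num)
    natCast_add_one_add_quarter_ne_zero
  have hi := scaledChoose_add_mul_factorial j i (s := -1) (ν := -(1 / 4)) (by norm_num)
    fun n => by simpa only [← sub_eq_add_neg] using natCast_add_one_sub_quarter_ne_zero n
  rw [add_comm (j : ℤ), add_comm j] at hi
  have hfi : (i.factorial : ℚ) ≠ 0 := by exact_mod_cast i.factorial_ne_zero
  have hfj : (j.factorial : ℚ) ≠ 0 := by exact_mod_cast j.factorial_ne_zero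
  unfold padeCoeff padeScale
  rw [Int.cast_mul, sub_eq_add_neg, eq_div_of_mul_eq hfi hi, eq_div_of_mul_eq hfj hj, pow_add]
  generalize ∏ l ∈ range (i + j), ((l : ℚ) + 1 + -(1 / 4)) = x
  field_simp

section PadePoly

variable {R : Type*} [CommRing R] [Algebra ℚ R]

theorem padePoly_eq_padeScale_smul (k : ℕ) (a b : R) :
    padePoly k a b = padeScale k • besselSum (1 / 4) a b k fun _ _ => 1 := by
  unfold padePoly besselSum
  rw [smul_sum]
  refine sum_congr rfl fun ij hij => ?_
  rw [smul_smul, Algebra.smul_def, ← HasAntidiagonal.mem_antidiagonal.mp hij,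
    ← padeCoeff_eq_padeScale_mul, map_intCast]

theorem padePoly_recurrence (k : ℕ) (a b : R) :
    ((k : R) + 1) * (k + 2) * padePoly (k + 2) a b =
      8 * (k + 1) * (2 * k + 3) * (a + b) * padePoly (k + 1) a b -
        (64 * (k + 1) ^ 2 - 4) * (b - a) ^ 2 * padePoly k a b := by
  have hbessel := besselSum_one_recurrence (ν := 1 / 4) a b natCast_add_one_add_quarter_ne_zero
    natCast_add_one_sub_quarter_ne_zero k
  have hquarter : (algebraMap ℚ R (1 / 4)) * 4 = 1 := by
    rw [← map_ofNat (algebraMap ℚ R) 4, ← map_mul]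
    norm_num
  simp only [padePoly_eq_padeScale_smul, padeScale_succ, Algebra.smul_def, map_mul, map_sub,
    map_pow, map_add, map_natCast, map_one, map_ofNat] at hbessel ⊢
  push_cast
  set f := algebraMap ℚ R (1 / 4)
  set c := algebraMap ℚ R (padeScale k)
  linear_combination (64 * c * (((k : R) + 1) ^ 2 - f ^ 2)) * hbessel +
    (4 * c * (b - a) ^ 2 * besselSum (1 / 4) a b k fun _ _ => 1) * (4 * f + 1) * hquarter

end PadePoly

section MapPadePoly

variable {R S : Type*} [CommRing R] [CommRing S]

theorem map_padePoly (f : R →+* S) (k : ℕ) (a b : R) :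
    f (padePoly k a b) = padePoly k (f a) (f b) := by
  simp [padePoly]

theorem padePoly_mul_mul (k : ℕ) (c a b : R) :
    padePoly k (c * a) (c * b) = c ^ k * padePoly k a b := by
  unfold padePoly
  rw [mul_sum]
  refine sum_congr rfl fun ij hij => ?_
  rw [← HasAntidiagonal.mem_antidiagonal.mp hij, pow_add, mul_pow, mul_pow]
  ring

end MapPadePoly

section Derivation

variable {R : Type*} [CommRing R] [Algebra ℚ R] (D : Derivation ℚ R R)

theorem derivation_natCast_mul (n : ℕ) (x : R) : D (n * x) = n * D x := by
  rw [← nsmul_eq_mul, map_nsmul, nsmul_eq_mul]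

theorem derivation_padePoly_recurrence (a b : R) (k : ℕ) :
    ((k : R) + 1) * (k + 2) * D (padePoly (k + 2) a b) =
      8 * (k + 1) * (2 * k + 3) * (D (a + b) * padePoly (k + 1) a b +
        (a + b) * D (padePoly (k + 1) a b)) -
        (64 * (k + 1) ^ 2 - 4) * (2 * (b - a) * D (b - a) * padePoly k a b +
          (b - a) ^ 2 * D (padePoly k a b)) := by
  have hk : padePoly (k + 2) a b * (((k + 1) * (k + 2) : ℕ) : R) =
      ((8 * (k + 1) * (2 * k + 3) : ℕ) : R) * ((a + b) * padePoly (k + 1) a b) -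
        ((64 * (k + 1) ^ 2 : ℕ) : R) * ((b - a) ^ 2 * padePoly k a b) +
        ((4 : ℕ) : R) * ((b - a) ^ 2 * padePoly k a b) := by
    push_cast
    linear_combination padePoly_recurrence k a b
  have hD := congrArg D hk
  simp only [mul_comm (padePoly (k + 2) a b), map_add D, map_sub D, derivation_natCast_mul,
    D.leibniz (a + b), D.leibniz _ (padePoly k a b), D.leibniz_pow] at hD
  simp only [smul_eq_mul, nsmul_eq_mul, pow_one, Nat.add_one_sub_one] at hD
  push_cast at hD
  rw [map_add D a b, map_sub D b a]
  linear_combination hD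

theorem derivation_padePoly [IsDomain R] (a b : R) (k : ℕ) :
    4 * ((k : R) + 1) * ((b - a) ^ 2 - (a + b) ^ 2) * D (padePoly (k + 1) a b) =
      (((b - a) - 4 * (k + 1) * (a + b)) * (k + 1) * padePoly (k + 1) a b +
        2 * (16 * (k + 1) ^ 2 - 1) * (b - a) ^ 2 * padePoly k a b) * D (a + b) +
      ((4 * (k + 1) * (b - a) - (a + b)) * (k + 1) * padePoly (k + 1) a b -
        2 * (16 * (k + 1) ^ 2 - 1) * (a + b) * (b - a) * padePoly k a b) * D (b - a) := by
  have : CharZero R := algebraRat.charZero R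
  have hone : padePoly 1 a b = 8 * (a + b) + 2 * (b - a) := by rw [padePoly_one]; ring
  have hrec := fun n => padePoly_recurrence n a b
  have hDrec := fun n => derivation_padePoly_recurrence D a b n
  set s := a + b
  set d := b - a
  have hDlin : D (8 * s + 2 * d) = 8 * D s + 2 * D d := by
    rw [map_add]
    exact congrArg₂ (· + ·) (derivation_natCast_mul D 8 s) (derivation_natCast_mul D 2 d)
  induction k using Nat.twoStepInduction with
  | zero =>
    simp only [zero_add, hone, hDlin, padePoly_zero]
    push_cast
    ring
  | one =>
    have hDtwo := hDrec 0
    have htwo := hrec 0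
    simp only [Nat.cast_zero, Nat.cast_one, zero_add, hone, hDlin, padePoly_zero, D.map_one_eq_zero,
      Nat.reduceAdd] at hDtwo htwo ⊢
    linear_combination 4 * (d ^ 2 - s ^ 2) * hDtwo -
      ((d - 8 * s) * D s + (8 * d - s) * D d) * htwo
  | more n ih ih' =>
    have hDn := hDrec (n + 1)
    have hn := hrec (n + 1)
    have hn' := hrec n
    push_cast at ih ih' hDn hn hn' ⊢
    have hne : ((n : R) + 1) * (n + 1 + 1) ≠ 0 :=
      mul_ne_zero n.cast_add_one_ne_zero (by exact_mod_cast (n + 1).cast_add_one_ne_zero (R := R))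
    apply mul_left_cancel₀ hne
    linear_combination 4 * ((n : R) + 1) * (d ^ 2 - s ^ 2) * hDn +
      8 * ((n : R) + 1) * (2 * n + 5) * s * ih' - (64 * ((n : R) + 2) ^ 2 - 4) * d ^ 2 * ih -
      ((n : R) + 1) * ((d - 4 * (n + 3) * s) * D s + (4 * (n + 3) * d - s) * D d) * hn -
      (32 * ((n : R) + 2) ^ 2 - 2) * d * (d * D s - s * D d) * hn'

end Derivation

section Jacobi

open Polynomial

/-- The dehomogenisation of `padePoly` with respect to `x = (a + b) / (b - a)`, which up to a scalar
is the Jacobi polynomial of degree `k` with parameters `1/4` and `-1/4`. -/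
noncomputable def padeJacobi (k : ℕ) : ℝ[X] := padePoly k (X - 1) (X + 1)

theorem eval_padeJacobi (k : ℕ) (x : ℝ) : (padeJacobi k).eval x = padePoly k (x - 1) (x + 1) := by
  rw [padeJacobi, ← coe_evalRingHom, map_padePoly]
  simp

theorem padeJacobi_zero : padeJacobi 0 = 1 := padePoly_zero _ _

theorem padeJacobi_recurrence (k : ℕ) :
    ((k : ℝ[X]) + 1) * ((k : ℝ[X]) + 2) * padeJacobi (k + 2) =
      16 * ((k : ℝ[X]) + 1) * (2 * (k : ℝ[X]) + 3) * X * padeJacobi (k + 1) -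
        16 * (16 * ((k : ℝ[X]) + 1) ^ 2 - 1) * padeJacobi k := by
  unfold padeJacobi
  linear_combination padePoly_recurrence k (X - 1 : ℝ[X]) (X + 1)

theorem derivative_padeJacobi_succ (k : ℕ) :
    4 * ((k : ℝ[X]) + 1) * (1 - X ^ 2) * derivative (padeJacobi (k + 1)) =
      (1 - 4 * ((k : ℝ[X]) + 1) * X) * ((k : ℝ[X]) + 1) * padeJacobi (k + 1) +
        4 * (16 * ((k : ℝ[X]) + 1) ^ 2 - 1) * padeJacobi k := by
  have hrel := derivation_padePoly ((Polynomial.derivative' (R := ℝ)).restrictScalars ℚ)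
    (X - 1 : ℝ[X]) (X + 1) k
  have hsum : derivative (X - 1 + (X + 1) : ℝ[X]) = 2 := by
    rw [sub_add_add_cancel, derivative_add, derivative_X]
    norm_num
  have hdiff : derivative (X + 1 - (X - 1) : ℝ[X]) = 0 := by simp
  simp only [Derivation.restrictScalars_apply, derivative'_apply, hsum, hdiff] at hrel
  unfold padeJacobi
  apply mul_left_cancel₀ (show (4 : ℝ[X]) ≠ 0 by norm_num)
  linear_combination hrel

theorem derivative_padeJacobi (k : ℕ) :
    16 * (1 - X ^ 2) * derivative (padeJacobi k) =
      (4 + 16 * ((k : ℝ[X]) + 1) * X) * padeJacobi k - ((k : ℝ[X]) + 1) * padeJacobi (k + 1) := by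
  cases k with
  | zero =>
    simp only [padeJacobi, padePoly_zero, padePoly_one, zero_add, Nat.cast_zero, derivative_one]
    ring
  | succ n =>
    apply mul_left_cancel₀ (n.cast_add_one_ne_zero (R := ℝ[X]))
    push_cast
    linear_combination 4 * derivative_padeJacobi_succ n + padeJacobi_recurrence n

theorem padeJacobi_ode (k : ℕ) :
    2 * (1 - X ^ 2) * derivative (derivative (padeJacobi (k + 1))) =
      (4 * X + 1) * derivative (padeJacobi (k + 1)) -
        2 * ((k : ℝ[X]) + 1) * ((k : ℝ[X]) + 2) * padeJacobi (k + 1) := by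
  have hk := derivative_padeJacobi_succ k
  have hD := congrArg derivative hk
  simp only [derivative_mul, derivative_pow, derivative_add, derivative_sub, derivative_one,
    derivative_X, derivative_natCast, derivative_ofNat, map_natCast] at hD
  push_cast at hD
  have hne : 8 * ((k : ℝ[X]) + 1) * (1 - X ^ 2) ≠ 0 := by
    refine mul_ne_zero (mul_ne_zero (by norm_num) k.cast_add_one_ne_zero) fun hzero => ?_
    simpa using congrArg (eval 0) hzero
  apply mul_left_cancel₀ hne
  linear_combination 4 * (1 - X ^ 2) * hD +
    (16 * ((k : ℝ[X]) + 1) ^ 2 - 1) * derivative_padeJacobi k - (1 + 4 * ((k : ℝ[X]) + 1) * X) * hk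

theorem padeJacobi_eval_one_succ (k : ℕ) :
    ((k : ℝ) + 1) * (padeJacobi (k + 1)).eval 1 = 4 * (4 * k + 5) * (padeJacobi k).eval 1 := by
  have heval := congrArg (eval 1) (derivative_padeJacobi_succ k)
  simp only [eval_mul, eval_add, eval_sub, eval_pow, eval_natCast, eval_ofNat, eval_one,
    eval_X] at heval
  apply mul_left_cancel₀ (show 4 * (k : ℝ) + 3 ≠ 0 by positivity)
  linear_combination heval

theorem padeJacobi_eval_neg_one_succ (k : ℕ) :
    ((k : ℝ) + 1) * (padeJacobi (k + 1)).eval (-1) =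
      -4 * (4 * k + 3) * (padeJacobi k).eval (-1) := by
  have heval := congrArg (eval (-1)) (derivative_padeJacobi_succ k)
  simp only [eval_mul, eval_add, eval_sub, eval_pow, eval_natCast, eval_ofNat, eval_one,
    eval_X] at heval
  apply mul_left_cancel₀ (show 4 * (k : ℝ) + 5 ≠ 0 by positivity)
  linear_combination -heval

theorem padeJacobi_eval_one_pos (k : ℕ) : 0 < (padeJacobi k).eval 1 := by
  induction k with
  | zero => simp [padeJacobi_zero]
  | succ k ih =>
    refine pos_of_mul_pos_right (a := (k : ℝ) + 1) ?_ (by positivity)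
    rw [padeJacobi_eval_one_succ]
    positivity

theorem abs_padeJacobi_eval_neg_one_le (k : ℕ) :
    |(padeJacobi k).eval (-1)| ≤ (padeJacobi k).eval 1 := by
  induction k with
  | zero => simp [padeJacobi_zero]
  | succ k ih =>
    have hk : (0 : ℝ) < k + 1 := by positivity
    refine le_of_mul_le_mul_left ?_ hk
    calc ((k : ℝ) + 1) * |(padeJacobi (k + 1)).eval (-1)|
        = |((k : ℝ) + 1) * (padeJacobi (k + 1)).eval (-1)| := by rw [abs_mul, abs_of_pos hk]
      _ = 4 * (4 * k + 3) * |(padeJacobi k).eval (-1)| := by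
        rw [padeJacobi_eval_neg_one_succ, abs_mul, neg_mul, abs_neg, abs_of_nonneg (by positivity)]
      _ ≤ 4 * (4 * k + 5) * (padeJacobi k).eval 1 := by
        gcongr
        norm_num
      _ = (k + 1) * (padeJacobi (k + 1)).eval 1 := (padeJacobi_eval_one_succ k).symm

theorem eval_le_max_of_derivative_sign {F : ℝ[X]} {c : ℝ}
    (hneg : ∀ y ≤ c, (derivative F).eval y ≤ 0) (hpos : ∀ y, c ≤ y → 0 ≤ (derivative F).eval y)
    {l x r : ℝ} (hlx : l ≤ x) (hxr : x ≤ r) : F.eval x ≤ max (F.eval l) (F.eval r) := by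
  rcases le_total x c with hxc | hcx
  · have hanti : AntitoneOn (fun z => F.eval z) (Set.Iic c) := by
      refine antitoneOn_of_deriv_nonpos (convex_Iic c) F.continuousOn F.differentiableOn ?_
      intro y hy
      rw [interior_Iic] at hy
      exact (F.deriv (x := y)).trans_le (hneg y hy.le)
    exact le_max_of_le_left (hanti (hlx.trans hxc) hxc hlx)
  · have hmono : MonotoneOn (fun z => F.eval z) (Set.Ici c) := by
      refine monotoneOn_of_deriv_nonneg (convex_Ici c) F.continuousOn F.differentiableOn ?_
      intro y hy
      rw [interior_Ici] at hy
      exact (hpos y hy.le).trans_eq (F.deriv (x := y)).symm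
    exact le_max_of_le_right (hmono hcx (hcx.trans hxr) hxr)

/-- Sonin's function attached to the differential equation `padeJacobi_ode`: it majorises a multiple
of `padeJacobi (k + 1) ^ 2` on `[-1, 1]` and has the same values at the end points. -/
noncomputable def soninPoly (k : ℕ) : ℝ[X] :=
  ((k : ℝ[X]) + 1) * ((k : ℝ[X]) + 2) * padeJacobi (k + 1) ^ 2 +
    (1 - X ^ 2) * derivative (padeJacobi (k + 1)) ^ 2

theorem derivative_soninPoly (k : ℕ) :
    derivative (soninPoly k) = (2 * X + 1) * derivative (padeJacobi (k + 1)) ^ 2 := by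
  unfold soninPoly
  simp only [derivative_mul, derivative_pow, derivative_add, derivative_sub, derivative_one,
    derivative_X, derivative_natCast, derivative_ofNat, map_natCast]
  push_cast
  linear_combination derivative (padeJacobi (k + 1)) * padeJacobi_ode k

theorem eval_soninPoly (k : ℕ) (x : ℝ) :
    (soninPoly k).eval x = (k + 1) * (k + 2) * (padeJacobi (k + 1)).eval x ^ 2 +
      (1 - x ^ 2) * (derivative (padeJacobi (k + 1))).eval x ^ 2 := by
  simp only [soninPoly, eval_add, eval_mul, eval_sub, eval_pow, eval_natCast, eval_ofNat, eval_one,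
    eval_X]

theorem abs_padeJacobi_eval_le (k : ℕ) {x : ℝ} (hx : |x| ≤ 1) :
    |(padeJacobi k).eval x| ≤ (padeJacobi k).eval 1 := by
  obtain _ | k := k
  · simp [padeJacobi_zero]
  set Q := padeJacobi (k + 1)
  obtain ⟨hx1, hx2⟩ := abs_le.mp hx
  have hmax : (soninPoly k).eval x ≤ max ((soninPoly k).eval (-1)) ((soninPoly k).eval 1) := by
    refine eval_le_max_of_derivative_sign (c := -1 / 2) (fun y hy => ?_) (fun y hy => ?_) hx1 hx2
    all_goals simp only [derivative_soninPoly, eval_mul, eval_add, eval_pow, eval_ofNat, eval_one,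
      eval_X]
    · exact mul_nonpos_of_nonpos_of_nonneg (by linarith) (sq_nonneg _)
    · exact mul_nonneg (by linarith) (sq_nonneg _)
  have hends : max ((soninPoly k).eval (-1)) ((soninPoly k).eval 1) =
      (k + 1) * (k + 2) * Q.eval 1 ^ 2 := by
    have hneg : Q.eval (-1) ^ 2 ≤ Q.eval 1 ^ 2 :=
      sq_le_sq' (neg_le_of_abs_le (abs_padeJacobi_eval_neg_one_le (k + 1)))
        (le_of_abs_le (abs_padeJacobi_eval_neg_one_le (k + 1)))
    rw [eval_soninPoly, eval_soninPoly]
    norm_num only [sub_self, zero_mul, add_zero]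
    exact max_eq_right (by gcongr)
  have hmajor : (k + 1) * (k + 2) * Q.eval x ^ 2 ≤ (soninPoly k).eval x := by
    rw [eval_soninPoly]
    exact le_add_of_nonneg_right (mul_nonneg (by nlinarith) (sq_nonneg _))
  refine abs_le_of_sq_le_sq ?_ (padeJacobi_eval_one_pos (k + 1)).le
  exact le_of_mul_le_mul_left ((hmajor.trans hmax).trans_eq hends) (by positivity)

theorem abs_padePoly_le (k : ℕ) {a b : ℝ} (h : a ≠ b) (hab : |a + b| ≤ |b - a|) :
    |padePoly k a b| ≤ (|b - a| / 2) ^ k * (padeJacobi k).eval 1 := by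
  have hba : b - a ≠ 0 := sub_ne_zero.mpr h.symm
  have hratio : |(a + b) / (b - a)| ≤ 1 := by
    rw [abs_div]
    exact div_le_one_of_le₀ hab (abs_nonneg _)
  have hdehom : padePoly k a b = ((b - a) / 2) ^ k * (padeJacobi k).eval ((a + b) / (b - a)) := by
    rw [eval_padeJacobi, ← padePoly_mul_mul]
    congr 1 <;> field_simp <;> ring
  rw [hdehom, abs_mul, abs_pow, abs_div, abs_two]
  gcongr
  exact abs_padeJacobi_eval_le k hratio

end Jacobi

section PowerSeries

open PowerSeries

theorem succ_mul_ringChoose_succ (r : ℚ) (n : ℕ) :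
    ((n : ℚ) + 1) * Ring.choose r (n + 1) = (r - n) * Ring.choose r n := by
  have h := Ring.choose_smul_choose r n.le_succ
  rw [Nat.succ_eq_add_one, Nat.choose_succ_self_right, Nat.add_sub_cancel_left,
    Ring.choose_one_right, nsmul_eq_mul] at h
  push_cast at h
  linear_combination h

theorem scaledChoose_eq_ringChoose (u : ℤ) (j : ℕ) :
    (scaledChoose u j : ℚ) = 8 ^ j * Ring.choose ((u : ℚ) / 4) j := by
  induction j with
  | zero => simp [scaledChoose_zero]
  | succ j ih =>
    have hsucc := congrArg (Int.cast (R := ℚ)) (scaledChoose_succ u j)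
    push_cast at hsucc
    apply mul_right_cancel₀ (j.cast_add_one_ne_zero (R := ℚ))
    linear_combination hsucc + 2 * ((u : ℚ) - 4 * j) * ih -
      8 ^ (j + 1) * succ_mul_ringChoose_succ ((u : ℚ) / 4) j

/-- The binomial series of `(1 + 8 c X) ^ (1/4)`, given by its coefficients, which are integers. -/
noncomputable def quarticRootSeries (c : ℤ) : ℚ⟦X⟧ :=
  PowerSeries.mk fun n => ((c ^ n * scaledChoose 1 n : ℤ) : ℚ)

theorem constantCoeff_quarticRootSeries (c : ℤ) : constantCoeff (quarticRootSeries c) = 1 := by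
  simp [quarticRootSeries, scaledChoose_zero, ← coeff_zero_eq_constantCoeff_apply]

theorem quarticRootSeries_eq_rescale (c : ℤ) :
    quarticRootSeries c = rescale (8 * (c : ℚ)) (PowerSeries.binomialSeries ℚ (1 / 4 : ℚ)) := by
  ext n
  simp only [quarticRootSeries, coeff_mk, coeff_rescale, binomialSeries_coeff, smul_eq_mul, mul_one,
    Int.cast_mul, Int.cast_pow, scaledChoose_eq_ringChoose, Int.cast_one]
  ring

theorem quarticRootSeries_pow_four (c : ℤ) : quarticRootSeries c ^ 4 = 1 + 8 * (c : ℚ⟦X⟧) * X := by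
  have hpow : PowerSeries.binomialSeries ℚ (1 / 4 : ℚ) ^ 4 = 1 + X := by
    have hone := binomialSeries_nat (R := ℚ) (A := ℚ) 1
    rw [pow_one, show ((1 : ℕ) : ℚ) = 1 / 4 + 1 / 4 + 1 / 4 + 1 / 4 by norm_num] at hone
    simp only [binomialSeries_add] at hone
    rw [← hone]
    ring
  rw [quarticRootSeries_eq_rescale, ← map_pow, hpow, map_add, map_one, rescale_X, map_mul,
    map_ofNat, map_intCast]

theorem derivative_quarticRootSeries (c : ℤ) :
    (1 + 8 * (c : ℚ⟦X⟧) * X) * d⁄dX ℚ (quarticRootSeries c) =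
      2 * (c : ℚ⟦X⟧) * quarticRootSeries c := by
  have hc : 1 + 8 * (c : ℚ⟦X⟧) * X = 1 + ((8 * c : ℤ) : ℚ⟦X⟧) * X := by push_cast; ring
  have hD : 4 * quarticRootSeries c ^ 3 * d⁄dX ℚ (quarticRootSeries c) = 8 * (c : ℚ⟦X⟧) := by
    have h := congrArg (d⁄dX ℚ) (quarticRootSeries_pow_four c)
    rw [hc, ← zsmul_eq_mul, map_add, map_zsmul, derivative_X, Derivation.map_one_eq_zero, zero_add,
      Derivation.leibniz_pow, zsmul_eq_mul, mul_one] at h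
    simp only [smul_eq_mul, nsmul_eq_mul, Nat.reduceSub] at h
    push_cast at h
    linear_combination h
  have : CharZero ℚ⟦X⟧ := algebraRat.charZero _
  apply mul_left_cancel₀ (show (4 : ℚ⟦X⟧) ≠ 0 by norm_num)
  linear_combination quarticRootSeries c * hD -
    4 * d⁄dX ℚ (quarticRootSeries c) * quarticRootSeries_pow_four c

/-- The series of `P_k (1 - 8 c X, 1 + 8 c X) (1 - 8 c X) ^ (1/4)`. Taking `c = 1` and `c = -1`
gives the two terms of `padeRemainder`, which satisfy the same differential relation. -/
noncomputable def padeSeries (c : ℤ) (k : ℕ) : ℚ⟦X⟧ :=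
  padePoly k (1 - 8 * (c : ℚ⟦X⟧) * X) (1 + 8 * (c : ℚ⟦X⟧) * X) * quarticRootSeries (-c)

theorem derivative_padeSeries (c : ℤ) (k : ℕ) :
    ((k : ℚ⟦X⟧) + 1) * (64 * (c : ℚ⟦X⟧) ^ 2 * X ^ 2 - 1) * d⁄dX ℚ (padeSeries c (k + 1)) =
      16 * (c : ℚ⟦X⟧) ^ 2 * (4 * (k : ℚ⟦X⟧) + 5) * X *
        (((k : ℚ⟦X⟧) + 1) * padeSeries c (k + 1) - 4 * (4 * (k : ℚ⟦X⟧) + 3) * padeSeries c k) := by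
  unfold padeSeries
  have hP := derivation_padePoly (d⁄dX ℚ) (1 - 8 * (c : ℚ⟦X⟧) * X) (1 + 8 * (c : ℚ⟦X⟧) * X) k
  have hsum : d⁄dX ℚ (1 - 8 * (c : ℚ⟦X⟧) * X + (1 + 8 * (c : ℚ⟦X⟧) * X)) = 0 := by
    rw [show 1 - 8 * (c : ℚ⟦X⟧) * X + (1 + 8 * (c : ℚ⟦X⟧) * X) = ((2 : ℕ) : ℚ⟦X⟧) by
      push_cast; ring, Derivation.map_natCast]
  have hdiff : d⁄dX ℚ (1 + 8 * (c : ℚ⟦X⟧) * X - (1 - 8 * (c : ℚ⟦X⟧) * X)) =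
      16 * (c : ℚ⟦X⟧) := by
    rw [show 1 + 8 * (c : ℚ⟦X⟧) * X - (1 - 8 * (c : ℚ⟦X⟧) * X) = (16 * c : ℤ) • X by
      rw [zsmul_eq_mul]; push_cast; ring, map_zsmul, derivative_X, zsmul_eq_mul, mul_one]
    push_cast
    rfl
  rw [hsum, hdiff] at hP
  have hT := derivative_quarticRootSeries (-c)
  push_cast at hT
  rw [Derivation.leibniz, smul_eq_mul, smul_eq_mul]
  have : CharZero ℚ⟦X⟧ := algebraRat.charZero _
  apply mul_left_cancel₀ (show (16 : ℚ⟦X⟧) ≠ 0 by norm_num)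
  linear_combination quarticRootSeries (-c) * hP -
    16 * ((k : ℚ⟦X⟧) + 1) * (1 + 8 * (c : ℚ⟦X⟧) * X) *
      padePoly (k + 1) (1 - 8 * (c : ℚ⟦X⟧) * X) (1 + 8 * (c : ℚ⟦X⟧) * X) * hT

/-- The remainder of the Padé approximation to `((1 + 8 X) / (1 - 8 X)) ^ (1/4)`, with denominators
cleared. -/
noncomputable def padeRemainder (k : ℕ) : ℚ⟦X⟧ := padeSeries 1 k - padeSeries (-1) k

theorem padeRemainder_eq (k : ℕ) :
    padeRemainder k = padePoly k (1 - 8 * X) (1 + 8 * X) * quarticRootSeries (-1) -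
      padePoly k (1 + 8 * X) (1 - 8 * X) * quarticRootSeries 1 := by
  simp only [padeRemainder, padeSeries, Int.cast_one, Int.cast_neg, mul_one, mul_neg, neg_neg,
    neg_mul, sub_neg_eq_add, ← sub_eq_add_neg]

theorem derivative_padeRemainder (k : ℕ) :
    ((k : ℚ⟦X⟧) + 1) * (64 * X ^ 2 - 1) * d⁄dX ℚ (padeRemainder (k + 1)) =
      X * (16 * (4 * (k : ℚ⟦X⟧) + 5) *
        (((k : ℚ⟦X⟧) + 1) * padeRemainder (k + 1) -
          4 * (4 * (k : ℚ⟦X⟧) + 3) * padeRemainder k)) := by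
  have hpos := derivative_padeSeries 1 k
  have hneg := derivative_padeSeries (-1) k
  push_cast at hpos hneg
  unfold padeRemainder
  rw [map_sub]
  linear_combination hpos - hneg

theorem constantCoeff_padeRemainder (k : ℕ) : constantCoeff (padeRemainder k) = 0 := by
  simp [padeRemainder_eq, map_padePoly, constantCoeff_quarticRootSeries]

theorem X_pow_succ_dvd_of_X_pow_dvd_derivative {f : ℚ⟦X⟧} {n : ℕ} (hf : constantCoeff f = 0)
    (hD : X ^ n ∣ d⁄dX ℚ f) : X ^ (n + 1) ∣ f := by
  rw [X_pow_dvd_iff] at hD ⊢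
  rintro (_ | m) hm
  · rwa [coeff_zero_eq_constantCoeff_apply]
  · have hcoeff := hD m (by omega)
    rw [coeff_derivative] at hcoeff
    exact (mul_eq_zero.mp hcoeff).resolve_right m.cast_add_one_ne_zero

theorem X_pow_dvd_padeRemainder (k : ℕ) : X ^ (2 * k + 1) ∣ padeRemainder k := by
  induction k with
  | zero => exact X_pow_succ_dvd_of_X_pow_dvd_derivative (constantCoeff_padeRemainder 0) (by simp)
  | succ k ih =>
    -- The differential relation raises a common power of `X` dividing both remainders by two.
    suffices h : ∀ j ≤ k + 1, X ^ (2 * j + 1) ∣ padeRemainder (k + 1) from h (k + 1) le_rfl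
    intro j hj
    induction j with
    | zero =>
      exact X_pow_succ_dvd_of_X_pow_dvd_derivative (constantCoeff_padeRemainder _) (by simp)
    | succ j ihj =>
      refine X_pow_succ_dvd_of_X_pow_dvd_derivative (constantCoeff_padeRemainder _) ?_
      have hunit : IsUnit (((k : ℚ⟦X⟧) + 1) * (64 * X ^ 2 - 1)) := by
        rw [isUnit_iff_constantCoeff, isUnit_iff_ne_zero]
        simpa [-neg_add_rev] using k.cast_add_one_ne_zero (R := ℚ)
      rw [← hunit.dvd_mul_left, derivative_padeRemainder, show 2 * (j + 1) = 2 * j + 1 + 1 by ring,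
        pow_succ']
      have hk : X ^ (2 * j + 1) ∣ padeRemainder k := (pow_dvd_pow X (by omega)).trans ih
      exact mul_dvd_mul_left X
        (((ihj (by omega)).mul_left _ |>.sub (hk.mul_left _)).mul_left _)

/-- The truncation of `quarticRootSeries c` modulo `X ^ n`. -/
noncomputable def quarticRootPoly (n : ℕ) (c : ℤ) : Polynomial ℤ :=
  trunc n (PowerSeries.mk fun j => c ^ j * scaledChoose 1 j)

theorem X_pow_dvd_quarticRootPoly_sub (n : ℕ) (c : ℤ) :
    X ^ n ∣ algebraMap (Polynomial ℤ) ℚ⟦X⟧ (quarticRootPoly n c) - quarticRootSeries c := by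
  rw [X_pow_dvd_iff]
  intro m hm
  simp [algebraMap_apply', quarticRootPoly, quarticRootSeries, coeff_trunc, hm]

theorem X_pow_dvd_of_X_pow_dvd_algebraMap {n : ℕ} {f : Polynomial ℤ}
    (h : X ^ n ∣ algebraMap (Polynomial ℤ) ℚ⟦X⟧ f) : Polynomial.X ^ n ∣ f := by
  rw [X_pow_dvd_iff] at h
  rw [Polynomial.X_pow_dvd_iff]
  intro m hm
  simpa [algebraMap_apply'] using h m hm

theorem X_pow_dvd_quarticRootPoly_pow_four_sub (n : ℕ) (c : ℤ) :
    Polynomial.X ^ n ∣ quarticRootPoly n c ^ 4 - (1 + 8 * (c : Polynomial ℤ) * Polynomial.X) := by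
  apply X_pow_dvd_of_X_pow_dvd_algebraMap
  have h := (X_pow_dvd_quarticRootPoly_sub n c).trans (sub_dvd_pow_sub_pow _ _ 4)
  rw [quarticRootSeries_pow_four] at h
  have hX : algebraMap (Polynomial ℤ) ℚ⟦X⟧ Polynomial.X = X := by simp [algebraMap_apply']
  simpa only [map_sub, map_pow, map_add, map_mul, map_one, map_ofNat, map_intCast, hX] using h

theorem X_pow_dvd_padePoly_mul_quarticRootPoly_sub (k : ℕ) :
    Polynomial.X ^ (2 * k + 1) ∣
      padePoly k (1 - 8 * Polynomial.X) (1 + 8 * Polynomial.X) * quarticRootPoly (2 * k + 1) (-1) -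
      padePoly k (1 + 8 * Polynomial.X) (1 - 8 * Polynomial.X) * quarticRootPoly (2 * k + 1) 1 := by
  apply X_pow_dvd_of_X_pow_dvd_algebraMap
  have hpos := X_pow_dvd_quarticRootPoly_sub (2 * k + 1) 1
  have hneg := X_pow_dvd_quarticRootPoly_sub (2 * k + 1) (-1)
  have hrem := X_pow_dvd_padeRemainder k
  rw [padeRemainder_eq] at hrem
  have h := (hrem.add (hneg.mul_left (padePoly k (1 - 8 * X) (1 + 8 * X)))).sub
    (hpos.mul_left (padePoly k (1 + 8 * X) (1 - 8 * X)))
  have hX : algebraMap (Polynomial ℤ) ℚ⟦X⟧ Polynomial.X = X := by simp [algebraMap_apply']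
  simp only [map_sub, map_add, map_mul, map_one, map_ofNat, map_padePoly, hX]
  convert h using 1
  ring

end PowerSeries

section PadeForm

variable {R : Type*} [CommRing R]

/-- The linear form in `W` and `e` obtained from `P_k (a, b) x - P_k (b, a) y` at the conjugate pair
`x, y = (a + b) W ± (b - a) e`. -/
def padeForm (k : ℕ) (a b W e : R) : R :=
  padePoly k a b * ((a + b) * W + (b - a) * e) - padePoly k b a * ((a + b) * W - (b - a) * e)

theorem map_padeForm {S : Type*} [CommRing S] (f : R →+* S) (k : ℕ) (a b W e : R) :
    f (padeForm k a b W e) = padeForm k (f a) (f b) (f W) (f e) := by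
  simp only [padeForm, map_sub, map_mul, map_add, map_padePoly]

theorem padeForm_mul_mul (k : ℕ) (c a b W e : R) :
    padeForm k (c * a) (c * b) W e = c ^ (k + 1) * padeForm k a b W e := by
  simp only [padeForm, padePoly_mul_mul]
  ring

theorem padeForm_swap (k : ℕ) (a b W e : R) : padeForm k b a W e = -padeForm k a b W e := by
  unfold padeForm
  ring

end PadeForm

section Nilpotent

variable {R : Type*} [CommRing R]

open Polynomial in
theorem exists_quarticRoots_of_nilpotent (k : ℕ) {η : R} (hη : η ^ (2 * k + 1) = 0) :
    ∃ u v : R, u ^ 4 = 1 + 8 * η ∧ v ^ 4 = 1 - 8 * η ∧ IsNilpotent (u - 1) ∧ IsNilpotent (v - 1) ∧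
      padePoly k (1 - 8 * η) (1 + 8 * η) * v = padePoly k (1 + 8 * η) (1 - 8 * η) * u := by
  have heval {f : ℤ[X]} (hf : X ^ (2 * k + 1) ∣ f) : eval₂RingHom (Int.castRingHom R) η f = 0 := by
    simpa [hη] using map_dvd (eval₂RingHom (Int.castRingHom R) η) hf
  have hfour (c : ℤ) := heval (X_pow_dvd_quarticRootPoly_pow_four_sub (2 * k + 1) c)
  have hpade := heval (X_pow_dvd_padePoly_mul_quarticRootPoly_sub k)
  have hnil (c : ℤ) :
      IsNilpotent (eval₂RingHom (Int.castRingHom R) η (quarticRootPoly (2 * k + 1) c) - 1) := by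
    have hX : X ∣ quarticRootPoly (2 * k + 1) c - 1 := by
      rw [X_dvd_iff]
      simp [quarticRootPoly, PowerSeries.coeff_trunc, scaledChoose_zero]
    obtain ⟨r, hr⟩ := map_dvd (eval₂RingHom (Int.castRingHom R) η) hX
    rw [map_sub, map_one, coe_eval₂RingHom, eval₂_X] at hr
    rw [coe_eval₂RingHom, hr]
    exact (Commute.all _ _).isNilpotent_mul_right ⟨_, hη⟩
  simp only [map_sub, map_pow, map_add, map_mul, map_one, map_ofNat, map_intCast, map_padePoly,
    coe_eval₂RingHom, eval₂_X, sub_eq_zero] at hfour hpade hnil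
  refine ⟨_, _, (hfour 1).trans ?_, (hfour (-1)).trans ?_, hnil 1, hnil (-1), hpade⟩
  all_goals push_cast; ring

theorem eq_of_pow_four_eq {u v w : R} (h2 : IsUnit (2 : R)) (hw : IsUnit w)
    (hu : IsNilpotent (u - w)) (hv : IsNilpotent (v - w)) (h : u ^ 4 = v ^ 4) : u = v := by
  have hunit : IsUnit ((u + v) * (u ^ 2 + v ^ 2)) := by
    have hexpand : (u + v) * (u ^ 2 + v ^ 2) = 2 * 2 * w ^ 3 +
        ((4 * w ^ 2 + 2 * w * (u - w) + u ^ 2 + v ^ 2) * (u - w) +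
          (4 * w ^ 2 + 2 * w * (v - w) + u ^ 2 + v ^ 2) * (v - w)) := by ring
    rw [hexpand]
    refine IsNilpotent.isUnit_add_left_of_commute ?_ ((h2.mul h2).mul (hw.pow 3)) (Commute.all _ _)
    exact (Commute.all _ _).isNilpotent_add ((Commute.all _ _).isNilpotent_mul_left hu)
      ((Commute.all _ _).isNilpotent_mul_left hv)
  refine sub_eq_zero.mp (hunit.mul_left_eq_zero.mp ?_)
  linear_combination h

theorem padeForm_eq_zero_of_quartic (k : ℕ) {η W e : R} (hη : η ^ (2 * k + 1) = 0)
    (h2 : IsUnit (2 : R)) (hW : IsUnit W)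
    (h : (1 + 8 * η) * (W + 8 * η * e) ^ 4 = (1 - 8 * η) * (W - 8 * η * e) ^ 4) :
    padeForm k (1 - 8 * η) (1 + 8 * η) W e = 0 := by
  obtain ⟨u, v, hu4, hv4, hu, hv, hpade⟩ := exists_quarticRoots_of_nilpotent k hη
  have hmul (x : R) : IsNilpotent (x * η) := (Commute.all _ _).isNilpotent_mul_left ⟨_, hη⟩
  have hunit : IsUnit v := by simpa using hv.isUnit_add_one
  have huv : u * (W + 8 * η * e) = v * (W - 8 * η * e) := by
    refine eq_of_pow_four_eq h2 hW ?_ ?_ (by rw [mul_pow, mul_pow, hu4, hv4, h])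
    · rw [show u * (W + 8 * η * e) - W = W * (u - 1) + (u * 8 * e) * η by ring]
      exact (Commute.all _ _).isNilpotent_add ((Commute.all _ _).isNilpotent_mul_left hu) (hmul _)
    · rw [show v * (W - 8 * η * e) - W = W * (v - 1) + (-v * 8 * e) * η by ring]
      exact (Commute.all _ _).isNilpotent_add ((Commute.all _ _).isNilpotent_mul_left hv) (hmul _)
  apply hunit.mul_left_cancel
  unfold padeForm
  linear_combination 2 * (W + 8 * η * e) * hpade + 2 * padePoly k (1 + 8 * η) (1 - 8 * η) * huv

end Nilpotent

section SqrtPowIdeal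

/-- The ideal `(N ^ (k + 1), N ^ k ω)` of `ℤ[ω]`, where `ω ^ 2 = N B`. It contains
`ω ^ (2 k + 1)`, so `ω` is nilpotent modulo it. -/
def sqrtPowIdeal (N B : ℤ) (k : ℕ) : Ideal (ℤ√(N * B)) where
  carrier := {z | N ^ (k + 1) ∣ z.re ∧ N ^ k ∣ z.im}
  zero_mem' := ⟨dvd_zero _, dvd_zero _⟩
  add_mem' := fun hx hy => ⟨dvd_add hx.1 hy.1, dvd_add hx.2 hy.2⟩
  smul_mem' := by
    rintro ⟨a, b⟩ ⟨_, _⟩ ⟨⟨u, rfl⟩, ⟨v, rfl⟩⟩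
    exact ⟨⟨a * u + B * b * v, by simp; ring⟩, ⟨a * v + b * (N * u), by simp; ring⟩⟩

variable {N B : ℤ} {k : ℕ}

theorem mem_sqrtPowIdeal {z : ℤ√(N * B)} :
    z ∈ sqrtPowIdeal N B k ↔ N ^ (k + 1) ∣ z.re ∧ N ^ k ∣ z.im := Iff.rfl

theorem isUnit_intCast_quotient_sqrtPowIdeal {c : ℤ} (h : IsCoprime c N) :
    IsUnit (c : ℤ√(N * B) ⧸ sqrtPowIdeal N B k) := by
  obtain ⟨x, y, hxy⟩ := h.pow_right (n := k + 1)
  have hpow : ((N ^ (k + 1) : ℤ) : ℤ√(N * B) ⧸ sqrtPowIdeal N B k) = 0 := by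
    rw [← map_intCast (Ideal.Quotient.mk (sqrtPowIdeal N B k)), Ideal.Quotient.eq_zero_iff_mem,
      mem_sqrtPowIdeal, Zsqrtd.re_intCast, Zsqrtd.im_intCast]
    exact ⟨dvd_rfl, dvd_zero _⟩
  have hcast := congrArg (Int.cast (R := ℤ√(N * B) ⧸ sqrtPowIdeal N B k)) hxy
  rw [Int.cast_add, Int.cast_mul, Int.cast_mul, hpow, mul_zero, add_zero, Int.cast_one] at hcast
  exact .of_mul_eq_one _ ((mul_comm _ _).trans hcast)

theorem sqrtd_pow_two_mul_add_one (d : ℤ) (k : ℕ) :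
    (Zsqrtd.sqrtd : ℤ√d) ^ (2 * k + 1) = ⟨0, d ^ k⟩ := by
  rw [pow_succ, pow_mul, pow_two, Zsqrtd.dmuld, ← Int.cast_pow]
  ext <;> simp only [Zsqrtd.re_mul, Zsqrtd.im_mul, Zsqrtd.re_intCast, Zsqrtd.im_intCast,
    Zsqrtd.re_sqrtd, Zsqrtd.im_sqrtd] <;> ring

theorem exists_mul_eight_eq_mk_sqrtd (h2 : IsCoprime 2 N) (hB : IsCoprime B N) :
    ∃ η : ℤ√(N * B) ⧸ sqrtPowIdeal N B k, η ^ (2 * k + 1) = 0 ∧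
      B * (8 * η) = Ideal.Quotient.mk (sqrtPowIdeal N B k) Zsqrtd.sqrtd := by
  set φ := Ideal.Quotient.mk (sqrtPowIdeal N B k)
  have hunit := isUnit_intCast_quotient_sqrtPowIdeal (B := B) (k := k)
    (hB.mul_left (h2.pow_left (m := 3)))
  obtain ⟨c, hc⟩ := hunit.exists_right_inv
  refine ⟨φ Zsqrtd.sqrtd * c, ?_, ?_⟩
  · have hzero : φ (⟨0, (N * B) ^ k⟩) = 0 := by
      rw [Ideal.Quotient.eq_zero_iff_mem, mem_sqrtPowIdeal, mul_pow]
      exact ⟨dvd_zero _, dvd_mul_right _ _⟩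
    rw [mul_pow, ← map_pow, sqrtd_pow_two_mul_add_one, hzero, zero_mul]
  · push_cast at hc
    linear_combination φ Zsqrtd.sqrtd * hc

theorem pow_dvd_im_padeForm {W e : ℤ} (k : ℕ) (h2 : IsCoprime 2 N) (hB : IsCoprime B N)
    (hW : IsCoprime W N)
    (h : (⟨B, 1⟩ : ℤ√(N * B)) * ⟨B * W, e⟩ ^ 4 - ⟨B, -1⟩ * ⟨B * W, -e⟩ ^ 4 ∈
      sqrtPowIdeal N B k) :
    N ^ k ∣ (padeForm k (⟨B, -1⟩ : ℤ√(N * B)) ⟨B, 1⟩ W e).im := by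
  refine (mem_sqrtPowIdeal.mp ?_).2
  rw [← Ideal.Quotient.eq_zero_iff_mem] at h ⊢
  set φ := Ideal.Quotient.mk (sqrtPowIdeal N B k)
  obtain ⟨η, hη, hω⟩ := exists_mul_eight_eq_mk_sqrtd (k := k) h2 hB
  have hmk (a b : ℤ) : φ ⟨a, b⟩ = a + b * (B * (8 * η)) := by
    rw [hω, show (⟨a, b⟩ : ℤ√(N * B)) = (a : ℤ√(N * B)) + (b : ℤ√(N * B)) * Zsqrtd.sqrtd by
      ext <;> simp, map_add, map_mul, map_intCast, map_intCast]
  have hplus : φ ⟨B, 1⟩ = B * (1 + 8 * η) := by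
    rw [hmk]
    push_cast
    ring
  have hminus : φ ⟨B, -1⟩ = B * (1 - 8 * η) := by
    rw [hmk]
    push_cast
    ring
  have h2unit := isUnit_intCast_quotient_sqrtPowIdeal (B := B) (k := k) h2
  rw [Int.cast_ofNat] at h2unit
  rw [map_padeForm, map_intCast, map_intCast, hplus, hminus, padeForm_mul_mul,
    padeForm_eq_zero_of_quartic k hη h2unit (isUnit_intCast_quotient_sqrtPowIdeal hW), mul_zero]
  have hBunit := isUnit_intCast_quotient_sqrtPowIdeal (B := B) (k := k) hB
  apply (hBunit.pow 5).mul_left_cancel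
  simp only [map_sub, map_mul, map_pow, hplus, hminus] at h
  simp only [hmk] at h
  push_cast at h
  linear_combination h

end SqrtPowIdeal

section ParityMultiples

variable {R : Type*} [CommRing R]

/-- The integer multiples of `d` or of `d s`, according to the parity of `r`. If `s ^ 2` is an
integer these are the graded pieces of `ℤ[s] d`. -/
def parityMultiples (d s : R) (r : ℕ) : AddSubgroup R := AddSubgroup.zmultiples (d * s ^ (r % 2))

theorem mem_parityMultiples {d s u : R} {r : ℕ} :
    u ∈ parityMultiples d s r ↔ ∃ z : ℤ, u = d * (s ^ (r % 2) * z) := by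
  simp only [parityMultiples, AddSubgroup.mem_zmultiples_iff, zsmul_eq_mul, eq_comm (a := u)]
  exact exists_congr fun z => by rw [mul_comm, mul_assoc]

theorem parityMultiples_add_two (d s : R) (r : ℕ) :
    parityMultiples d s (r + 2) = parityMultiples d s r := by
  rw [parityMultiples, Nat.add_mod_right, parityMultiples]

theorem intCast_mul_mem_parityMultiples {d s u : R} {r : ℕ} (c : ℤ)
    (hu : u ∈ parityMultiples d s r) : c * u ∈ parityMultiples d s r := by
  rw [← zsmul_eq_mul]
  exact AddSubgroup.zsmul_mem _ hu c

theorem mul_eq_of_mem_parityMultiples_succ {d s u : R} {B : ℤ} (hs : s ^ 2 = B) {r : ℕ}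
    (hu : u ∈ parityMultiples d s (r + 1)) :
    ∃ z : ℤ, s * u = d * (s ^ (r % 2) * z) ∧ B ∣ B ^ (r % 2) * z ^ 2 := by
  obtain ⟨z, rfl⟩ := mem_parityMultiples.mp hu
  rcases Nat.mod_two_eq_zero_or_one r with hr | hr
  · refine ⟨B * z, ?_, ⟨B * z ^ 2, by rw [hr]; ring⟩⟩
    rw [hr, Nat.succ_mod_two_eq_one_iff.mpr hr]
    push_cast
    linear_combination d * z * hs
  · refine ⟨z, ?_, ⟨z ^ 2, by rw [hr]; ring⟩⟩
    rw [hr, Nat.succ_mod_two_eq_zero_iff.mpr hr]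
    ring

theorem mul_mem_parityMultiples_succ {d s u : R} {B : ℤ} (hs : s ^ 2 = B) {r : ℕ}
    (hu : u ∈ parityMultiples d s r) : s * u ∈ parityMultiples d s (r + 1) := by
  rw [← parityMultiples_add_two] at hu
  obtain ⟨z, hz, -⟩ := mul_eq_of_mem_parityMultiples_succ hs hu
  exact mem_parityMultiples.mpr ⟨z, hz⟩

variable {a b d : R} {B c : ℤ}

theorem mem_parityMultiples_of_recurrence (hs : (a + b) ^ 2 = B) {f : ℕ → R} {r : ℕ}
    (hf : ∀ n, f (n + 2) = (a + b) * f (n + 1) - c * f n)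
    (h0 : f 0 ∈ parityMultiples d (a + b) r) (h1 : f 1 ∈ parityMultiples d (a + b) (r + 1))
    (n : ℕ) : f n ∈ parityMultiples d (a + b) (r + n) := by
  induction n using Nat.twoStepInduction with
  | zero => exact h0
  | one => exact h1
  | more n ih ih' =>
    rw [hf, ← add_assoc]
    refine AddSubgroup.sub_mem _ (mul_mem_parityMultiples_succ hs ih') ?_
    rw [parityMultiples_add_two]
    exact intCast_mul_mem_parityMultiples c ih

/-- Symmetry exchanges `i` and `j`, and the common power of `a b` is an integer, so that only pure
powers have to be considered. -/
theorem pow_mul_pow_mem_parityMultiples (hs : (a + b) ^ 2 = B) (hc : a * b = c) {ε : ℤ} {r : ℕ}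
    (hε : ε ^ 2 = 1) (h0 : 1 + (ε : R) ∈ parityMultiples d (a + b) r)
    (h1 : b + ε * a ∈ parityMultiples d (a + b) (r + 1)) (i j : ℕ) :
    a ^ i * b ^ j + ε * (b ^ i * a ^ j) ∈ parityMultiples d (a + b) (r + (i + j)) := by
  have hεR : (ε : R) ^ 2 = 1 := by exact_mod_cast congrArg (Int.cast (R := R)) hε
  have hpow (n : ℕ) : b ^ n + ε * a ^ n ∈ parityMultiples d (a + b) (r + n) := by
    refine mem_parityMultiples_of_recurrence (f := fun n => b ^ n + ε * a ^ n) (c := c) hs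
      (fun n => ?_) ?_ ?_ n
    · rw [← hc]
      ring
    · simpa only [pow_zero, mul_one] using h0
    · simpa only [pow_one] using h1
  induction i generalizing j with
  | zero => simpa only [pow_zero, one_mul, zero_add] using hpow j
  | succ i ih =>
    cases j with
    | zero =>
      rw [show a ^ (i + 1) * b ^ 0 + ε * (b ^ (i + 1) * a ^ 0) =
        ε * (b ^ (i + 1) + ε * a ^ (i + 1)) by linear_combination -a ^ (i + 1) * hεR]
      exact intCast_mul_mem_parityMultiples ε (hpow (i + 1))
    | succ j =>
      rw [show a ^ (i + 1) * b ^ (j + 1) + ε * (b ^ (i + 1) * a ^ (j + 1)) =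
          c * (a ^ i * b ^ j + ε * (b ^ i * a ^ j)) by rw [← hc]; ring,
        show r + (i + 1 + (j + 1)) = r + (i + j) + 2 by ring, parityMultiples_add_two]
      exact intCast_mul_mem_parityMultiples c (ih j)

theorem pow_mul_pow_add_mem_parityMultiples (hs : (a + b) ^ 2 = B) (hc : a * b = c) (i j : ℕ) :
    a ^ i * b ^ j + b ^ i * a ^ j ∈ parityMultiples 1 (a + b) (i + j) := by
  have h := pow_mul_pow_mem_parityMultiples (d := 1) (r := 0) (ε := 1) hs hc (one_pow 2)
    (mem_parityMultiples.mpr ⟨2, by push_cast; ring⟩)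
    (mem_parityMultiples.mpr ⟨1, by push_cast; ring⟩) i j
  simpa only [Int.cast_one, one_mul, zero_add] using h

theorem pow_mul_pow_sub_mem_parityMultiples (hs : (a + b) ^ 2 = B) (hc : a * b = c) (i j : ℕ) :
    a ^ i * b ^ j - b ^ i * a ^ j ∈ parityMultiples (b - a) (a + b) (i + j + 1) := by
  have h := pow_mul_pow_mem_parityMultiples (d := b - a) (r := 1) (ε := -1) hs hc (by norm_num)
    (mem_parityMultiples.mpr ⟨0, by push_cast; ring⟩)
    (mem_parityMultiples.mpr ⟨1, by push_cast; ring⟩) i j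
  simpa only [Int.cast_neg, Int.cast_one, neg_one_mul, ← sub_eq_add_neg, add_comm 1] using h

theorem padePoly_add_mem_parityMultiples (hs : (a + b) ^ 2 = B) (hc : a * b = c) (k : ℕ) :
    padePoly k a b + padePoly k b a ∈ parityMultiples 1 (a + b) k := by
  unfold padePoly
  simp only [← sum_add_distrib, ← mul_add]
  refine AddSubgroup.sum_mem _ fun ij hij => intCast_mul_mem_parityMultiples _ ?_
  rw [← mem_antidiagonal.mp hij]
  exact pow_mul_pow_add_mem_parityMultiples hs hc _ _

theorem padePoly_sub_mem_parityMultiples (hs : (a + b) ^ 2 = B) (hc : a * b = c) (k : ℕ) :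
    padePoly k a b - padePoly k b a ∈ parityMultiples (b - a) (a + b) (k + 1) := by
  unfold padePoly
  simp only [← sum_sub_distrib, ← mul_sub]
  refine AddSubgroup.sum_mem _ fun ij hij => intCast_mul_mem_parityMultiples _ ?_
  rw [← mem_antidiagonal.mp hij]
  exact pow_mul_pow_sub_mem_parityMultiples hs hc _ _

theorem padeForm_add_sub_mem_parityMultiples (hs : (a + b) ^ 2 = B) (hc : a * b = c) (k : ℕ)
    (f g : ℤ) : ∃ H : ℤ, padeForm k a b ((f : R) + g) ((f : R) - g) =
      2 * (b - a) * ((a + b) ^ (k % 2) * H) := by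
  suffices h : padePoly k a b * (b * f + a * g) - padePoly k b a * (a * f + b * g) ∈
      parityMultiples (b - a) (a + b) k by
    obtain ⟨H, hH⟩ := mem_parityMultiples.mp h
    refine ⟨H, ?_⟩
    unfold padeForm
    linear_combination 2 * hH
  unfold padePoly
  rw [sum_mul, sum_mul, ← sum_sub_distrib]
  refine AddSubgroup.sum_mem _ fun ⟨i, j⟩ hij => ?_
  have hk : i + j = k := mem_antidiagonal.mp hij
  have hf := pow_mul_pow_sub_mem_parityMultiples hs hc i (j + 1)
  have hg := pow_mul_pow_sub_mem_parityMultiples hs hc (i + 1) j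
  rw [show i + (j + 1) + 1 = k + 2 by omega, parityMultiples_add_two] at hf
  rw [show i + 1 + j + 1 = k + 2 by omega, parityMultiples_add_two] at hg
  convert intCast_mul_mem_parityMultiples (padeCoeff (i, j)) (AddSubgroup.add_mem _
    (intCast_mul_mem_parityMultiples f hf) (intCast_mul_mem_parityMultiples g hg)) using 1
  ring

end ParityMultiples

section PadeForm

variable {K : Type*} [Field K] [CharZero K] {a b : K}

theorem two_mul_eq_of_padeForm_eq {B c : ℤ} (hs : (a + b) ^ 2 = B) (hc : a * b = c) (hab : a ≠ b)
    (hs0 : a + b ≠ 0) {k : ℕ} {W e H : ℤ}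
    (hH : padeForm k a b (W : K) e = 2 * (b - a) * ((a + b) ^ (k % 2) * H)) :
    ∃ z₁ z₂ : ℤ, 2 * H = W * z₁ + e * z₂ ∧ B ∣ B ^ (k % 2) * z₁ ^ 2 := by
  obtain ⟨z₁, hz₁, hdvd⟩ :=
    mul_eq_of_mem_parityMultiples_succ hs (padePoly_sub_mem_parityMultiples hs hc k)
  obtain ⟨z₂, hz₂⟩ := mem_parityMultiples.mp (padePoly_add_mem_parityMultiples hs hc k)
  refine ⟨z₁, z₂, ?_, hdvd⟩
  have hne : (b - a) * (a + b) ^ (k % 2) ≠ 0 :=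
    mul_ne_zero (sub_ne_zero.mpr hab.symm) (pow_ne_zero _ hs0)
  suffices h : (2 : K) * H = W * z₁ + e * z₂ by exact_mod_cast h
  apply mul_left_cancel₀ hne
  unfold padeForm at hH
  linear_combination W * hz₁ + (b - a) * e * hz₂ - hH

theorem exists_padeForm_eq {B c : ℤ} (hs : (a + b) ^ 2 = B) (hc : a * b = c) (hab : a ≠ b)
    (hs0 : a + b ≠ 0) {W e : ℤ} (hW : Odd W) (he : Odd e) (hdvd : e ∣ B * W ^ 2) (k : ℕ) :
    ∃ H : ℤ, padeForm k a b (W : K) e = 2 * (b - a) * ((a + b) ^ (k % 2) * H) ∧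
      e ∣ B ^ (k % 2) * H ^ 2 := by
  obtain ⟨f, hf⟩ := (hW.add_odd he).two_dvd
  obtain ⟨H, hH⟩ := padeForm_add_sub_mem_parityMultiples hs hc k f (W - f)
  rw [← Int.cast_add, ← Int.cast_sub, add_sub_cancel, show f - (W - f) = e by linarith] at hH
  refine ⟨H, hH, ?_⟩
  obtain ⟨z₁, z₂, hsum, hz₁⟩ := two_mul_eq_of_padeForm_eq hs hc hab hs0 hH
  have hexpand : 2 ^ 2 * (B ^ (k % 2) * H ^ 2) = B ^ (k % 2) * z₁ ^ 2 * W ^ 2 +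
      e * (B ^ (k % 2) * (2 * W * z₁ * z₂ + e * z₂ ^ 2)) := by
    linear_combination B ^ (k % 2) * (2 * H + (W * z₁ + e * z₂)) * hsum
  refine ((Int.isCoprime_two_right.mpr he).pow_right (n := 2)).dvd_of_dvd_mul_left ?_
  rw [hexpand]
  exact dvd_add (hdvd.trans (mul_dvd_mul_right hz₁ _)) (dvd_mul_right _ _)

theorem padeForm_zero_ne_zero (hab : a ≠ b) (W : K) {e : K} (he : e ≠ 0) :
    padeForm 0 a b W e ≠ 0 := by
  rw [padeForm, padePoly_zero, padePoly_zero, show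
    1 * ((a + b) * W + (b - a) * e) - 1 * ((a + b) * W - (b - a) * e) = 2 * (b - a) * e by ring]
  exact mul_ne_zero (mul_ne_zero two_ne_zero (sub_ne_zero.mpr hab.symm)) he

theorem padeForm_recurrence (k : ℕ) (a b W e : K) :
    ((k : K) + 1) * (k + 2) * padeForm (k + 2) a b W e =
      8 * (k + 1) * (2 * k + 3) * (a + b) * padeForm (k + 1) a b W e -
        (64 * (k + 1) ^ 2 - 4) * (b - a) ^ 2 * padeForm k a b W e := by
  unfold padeForm
  linear_combination ((a + b) * W + (b - a) * e) * padePoly_recurrence k a b -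
    ((a + b) * W - (b - a) * e) * padePoly_recurrence k b a

theorem padeForm_succ_ne_zero_of_eq_zero (hab : a ≠ b) (W : K) {e : K} (he : e ≠ 0) {k : ℕ}
    (hk : padeForm k a b W e = 0) : padeForm (k + 1) a b W e ≠ 0 := by
  induction k with
  | zero => exact absurd hk (padeForm_zero_ne_zero hab W he)
  | succ k ih =>
    intro hsucc
    have hrec := padeForm_recurrence k a b W e
    rw [hk, hsucc, mul_zero, mul_zero, zero_sub, eq_comm, neg_eq_zero] at hrec
    have hcoeff : (64 * ((k : K) + 1) ^ 2 - 4) ≠ 0 := by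
      rw [show (64 * ((k : K) + 1) ^ 2 - 4) = ((64 * k ^ 2 + 128 * k + 60 : ℕ) : K) by
        push_cast; ring, Nat.cast_ne_zero]
      omega
    have hzero := (mul_eq_zero.mp hrec).resolve_left
      (mul_ne_zero hcoeff (pow_ne_zero 2 (sub_ne_zero.mpr hab.symm)))
    exact ih hzero hk

end PadeForm

section JacobiBound

theorem padeJacobi_eval_one_succ_le {k : ℕ} (hk : 2 ≤ k) :
    3 * (padeJacobi (k + 1)).eval 1 ≤ 52 * (padeJacobi k).eval 1 := by
  have hk' : (2 : ℝ) ≤ k := by exact_mod_cast hk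
  refine le_of_mul_le_mul_left ?_ (by positivity : 0 < (k : ℝ) + 1)
  nlinarith [padeJacobi_eval_one_succ k, padeJacobi_eval_one_pos k]

theorem padeJacobi_eval_one_add_two_le {k : ℕ} (hk : 2 ≤ k) :
    (padeJacobi (k + 2)).eval 1 ≤ 352 * (padeJacobi k).eval 1 := by
  have hk' : (2 : ℝ) ≤ k := by exact_mod_cast hk
  have hpos := padeJacobi_eval_one_pos k
  have hstep : ((k : ℝ) + 2) * (k + 1) * (padeJacobi (k + 2)).eval 1 =
      16 * (4 * k + 9) * (4 * k + 5) * (padeJacobi k).eval 1 := by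
    have h0 := padeJacobi_eval_one_succ k
    have h1 := padeJacobi_eval_one_succ (k + 1)
    push_cast at h1
    linear_combination (k + 1) * h1 + 4 * (4 * k + 9) * h0
  have hratio : 16 * (4 * (k : ℝ) + 9) * (4 * k + 5) ≤ 352 * ((k + 2) * (k + 1)) := by nlinarith
  refine le_of_mul_le_mul_left ?_ (by positivity : 0 < ((k : ℝ) + 2) * (k + 1))
  rw [hstep]
  linear_combination (padeJacobi k).eval 1 * hratio

theorem padeJacobi_eval_one_even_le (n : ℕ) :
    (padeJacobi (2 * (n + 1))).eval 1 ≤ 360 * 352 ^ n := by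
  induction n with
  | zero =>
    have h0 := padeJacobi_eval_one_succ 0
    have h1 := padeJacobi_eval_one_succ 1
    rw [padeJacobi_zero, Polynomial.eval_one] at h0
    norm_num at h0 h1 ⊢
    linarith
  | succ n ih =>
    have hstep := padeJacobi_eval_one_add_two_le (k := 2 * (n + 1)) (by omega)
    rw [pow_succ]
    exact hstep.trans (by linarith)

theorem padeJacobi_eval_one_even_sq_mul_lt {N : ℝ} (hN : 8192 ≤ N) (n : ℕ) :
    (padeJacobi (2 * (n + 1))).eval 1 ^ 2 * (N ^ (n + 1) + 1 / 2) <
      16 ^ (n + 1) * (N ^ (n + 1)) ^ 2 := by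
  have hM : 8192 ≤ N ^ (n + 1) := hN.trans (le_self_pow₀ (by linarith) n.succ_ne_zero)
  have hpos := padeJacobi_eval_one_pos (2 * (n + 1))
  calc (padeJacobi (2 * (n + 1))).eval 1 ^ 2 * (N ^ (n + 1) + 1 / 2)
      ≤ (360 * 352 ^ n) ^ 2 * (16385 / 16384 * N ^ (n + 1)) := by
        gcongr
        · exact padeJacobi_eval_one_even_le n
        · linarith
    _ = 129600 * 16385 / 16384 * (352 ^ 2) ^ n * N ^ (n + 1) := by
        rw [pow_right_comm 352 2 n]
        ring
    _ < 131072 * 131072 ^ n * N ^ (n + 1) := by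
        gcongr ?_ * _
        apply mul_lt_mul <;> norm_num
        gcongr
        norm_num
    _ = 16 ^ (n + 1) * 8192 ^ (n + 1) * N ^ (n + 1) := by
        rw [← mul_pow, ← pow_succ']
        norm_num
    _ ≤ 16 ^ (n + 1) * N ^ (n + 1) * N ^ (n + 1) := by gcongr
    _ = 16 ^ (n + 1) * (N ^ (n + 1)) ^ 2 := by ring

theorem padeJacobi_eval_one_sq_mul_lt {N : ℝ} (hN : 8192 ≤ N) {n k : ℕ} (hn : 1 ≤ n)
    (hk : k = 2 * n ∨ k = 2 * n + 1) :
    (padeJacobi k).eval 1 ^ 2 * (N ^ n + 1 / 2) < 4 ^ k * N ^ k := by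
  obtain ⟨n, rfl⟩ := Nat.exists_eq_add_of_le' hn
  have heven := padeJacobi_eval_one_even_sq_mul_lt hN n
  have h16 : (4 : ℝ) ^ (2 * (n + 1)) * N ^ (2 * (n + 1)) = 16 ^ (n + 1) * (N ^ (n + 1)) ^ 2 := by
    rw [pow_mul, pow_mul']
    norm_num
  rcases hk with rfl | rfl
  · rwa [h16]
  · have hpos := padeJacobi_eval_one_pos (2 * (n + 1) + 1)
    have hsq : 9 * (padeJacobi (2 * (n + 1) + 1)).eval 1 ^ 2 ≤
        2704 * (padeJacobi (2 * (n + 1))).eval 1 ^ 2 := by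
      have h := pow_le_pow_left₀ (by positivity)
        (padeJacobi_eval_one_succ_le (k := 2 * (n + 1)) (by omega)) 2
      linear_combination h
    have hM : 0 < 16 ^ (n + 1) * (N ^ (n + 1)) ^ 2 := by positivity
    calc (padeJacobi (2 * (n + 1) + 1)).eval 1 ^ 2 * (N ^ (n + 1) + 1 / 2)
        ≤ 2704 / 9 * (padeJacobi (2 * (n + 1))).eval 1 ^ 2 * (N ^ (n + 1) + 1 / 2) := by
          gcongr
          linarith
      _ < 4 * N * (16 ^ (n + 1) * (N ^ (n + 1)) ^ 2) := by nlinarith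
      _ = 4 ^ (2 * (n + 1) + 1) * N ^ (2 * (n + 1) + 1) := by
          rw [← h16]
          ring

end JacobiBound

/-! ### A bound for the norm -/

section PadeFormBounds

theorem re_padeForm_star {d : ℤ} (k : ℕ) (z : ℤ√d) (W e : ℤ) :
    (padeForm k (star z) z (W : ℤ√d) e).re = 0 := by
  have hstar : star (padeForm k (star z) z (W : ℤ√d) e) = -padeForm k (star z) z (W : ℤ√d) e := by
    rw [← starRingEnd_apply, map_padeForm, map_intCast, map_intCast, starRingEnd_apply,
      starRingEnd_apply, star_star, padeForm_swap]
  have hre := congrArg Zsqrtd.re hstar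
  rw [Zsqrtd.re_star, Zsqrtd.re_neg] at hre
  linarith

theorem intCast_im_padeForm_mul {R : Type*} [CommRing R] {N B : ℤ} {a b : R}
    (hs : (a + b) ^ 2 = B) (ht : (b - a) ^ 2 = N) (k : ℕ) (W e : ℤ) :
    ((padeForm k (⟨B, -1⟩ : ℤ√(N * B)) ⟨B, 1⟩ W e).im : R) * ((a + b) * (b - a)) =
      (2 * (a + b)) ^ (k + 1) * padeForm k a b W e := by
  have hω : (a + b) * (b - a) * ((a + b) * (b - a)) = ((N * B : ℤ) : R) := by
    push_cast
    rw [← hs, ← ht]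
    ring
  let f : ℤ√(N * B) →+* R := Zsqrtd.lift ⟨(a + b) * (b - a), hω⟩
  have hmk (z : ℤ√(N * B)) : f z = z.re + z.im * ((a + b) * (b - a)) := rfl
  have hre : (padeForm k (⟨B, -1⟩ : ℤ√(N * B)) ⟨B, 1⟩ W e).re = 0 := by
    simpa only [Zsqrtd.star_mk] using re_padeForm_star k (⟨B, 1⟩ : ℤ√(N * B)) W e
  have himage : f (padeForm k ⟨B, -1⟩ ⟨B, 1⟩ W e) =
      (padeForm k (⟨B, -1⟩ : ℤ√(N * B)) ⟨B, 1⟩ W e).im * ((a + b) * (b - a)) := by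
    rw [hmk, hre, Int.cast_zero, zero_add]
  have hminus : f ⟨B, -1⟩ = 2 * (a + b) * a := by
    simp only [hmk, ← hs]
    push_cast
    ring
  have hplus : f ⟨B, 1⟩ = 2 * (a + b) * b := by
    simp only [hmk, ← hs]
    push_cast
    ring
  rw [← himage, map_padeForm, map_intCast, map_intCast, hminus, hplus, padeForm_mul_mul]

theorem pow_dvd_of_padeForm_eq {K : Type*} [Field K] [CharZero K] {N B W e H : ℤ} {a b : K}
    (hs : (a + b) ^ 2 = B) (ht : (b - a) ^ 2 = N) (hs0 : a + b ≠ 0) (ht0 : b - a ≠ 0) {k : ℕ}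
    (h2 : IsCoprime 2 N) (hB : IsCoprime B N)
    (hH : padeForm k a b (W : K) e = 2 * (b - a) * ((a + b) ^ (k % 2) * H))
    (hdvd : N ^ k ∣ (padeForm k (⟨B, -1⟩ : ℤ√(N * B)) ⟨B, 1⟩ W e).im) : N ^ k ∣ H := by
  obtain ⟨j, hj⟩ : ∃ j, k + k % 2 = 2 * j := ⟨(k + k % 2) / 2, by omega⟩
  have him : (padeForm k (⟨B, -1⟩ : ℤ√(N * B)) ⟨B, 1⟩ W e).im = 2 ^ (k + 2) * (B ^ j * H) := by
    suffices h : ((padeForm k (⟨B, -1⟩ : ℤ√(N * B)) ⟨B, 1⟩ W e).im : K) =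
        2 ^ (k + 2) * ((B : K) ^ j * H) by exact_mod_cast h
    apply mul_right_cancel₀ (mul_ne_zero hs0 ht0)
    rw [intCast_im_padeForm_mul hs ht, hH, ← hs, ← pow_mul, ← hj, mul_pow]
    ring
  rw [him] at hdvd
  exact hB.symm.pow.dvd_of_dvd_mul_left (h2.symm.pow.dvd_of_dvd_mul_left hdvd)

theorem sq_abs_add_add_abs_sub_le {x y M : ℝ} (hx : x ^ 2 ≤ M) (hy : y ^ 2 ≤ M) :
    (|x + y| + |x - y|) ^ 2 ≤ 4 * M := by
  have hprod : |x + y| * |x - y| = |x ^ 2 - y ^ 2| := by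
    rw [← abs_mul]
    congr 1
    ring
  have hexpand : (|x + y| + |x - y|) ^ 2 = 2 * x ^ 2 + 2 * y ^ 2 + 2 * |x ^ 2 - y ^ 2| := by
    linear_combination sq_abs (x + y) + sq_abs (x - y) + 2 * hprod
  rw [hexpand]
  rcases abs_cases (x ^ 2 - y ^ 2) with h | h <;> linarith

theorem padeForm_sq_le (k : ℕ) {a b W e M : ℝ} (hne : a ≠ b) (hle : |a + b| ≤ |b - a|)
    (hW : ((a + b) * W) ^ 2 ≤ M) (he : ((b - a) * e) ^ 2 ≤ M) :
    padeForm k a b W e ^ 2 ≤ ((b - a) ^ 2 / 4) ^ k * (padeJacobi k).eval 1 ^ 2 * (4 * M) := by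
  have hleft := abs_padePoly_le k hne hle
  have hright := abs_padePoly_le k hne.symm (by rwa [add_comm, abs_sub_comm a])
  rw [abs_sub_comm a] at hright
  have habs : |padeForm k a b W e| ≤ (|b - a| / 2) ^ k * (padeJacobi k).eval 1 *
      (|(a + b) * W + (b - a) * e| + |(a + b) * W - (b - a) * e|) := by
    refine (abs_sub _ _).trans ?_
    rw [abs_mul, abs_mul, mul_add]
    gcongr
  calc padeForm k a b W e ^ 2
      = |padeForm k a b W e| ^ 2 := (sq_abs _).symm
    _ ≤ ((|b - a| / 2) ^ k * (padeJacobi k).eval 1 *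
        (|(a + b) * W + (b - a) * e| + |(a + b) * W - (b - a) * e|)) ^ 2 := by gcongr
    _ = ((b - a) ^ 2 / 4) ^ k * (padeJacobi k).eval 1 ^ 2 *
        (|(a + b) * W + (b - a) * e| + |(a + b) * W - (b - a) * e|) ^ 2 := by
      rw [mul_pow, mul_pow, pow_right_comm, div_pow, sq_abs]
      norm_num
    _ ≤ _ := by
      gcongr
      exact sq_abs_add_add_abs_sub_le hW he

theorem pow_mul_abs_le_of_dvd {N B e H : ℤ} {k j : ℕ} (hB : 0 < B) (hH : H ≠ 0)
    (he : IsCoprime e N) (hN : N ^ k ∣ H) (hdvd : e ∣ B ^ j * H ^ 2) :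
    N ^ (2 * k) * |e| ≤ B ^ j * H ^ 2 := by
  have hmul : N ^ (2 * k) * e ∣ B ^ j * H ^ 2 := by
    refine he.symm.pow_left.mul_dvd ?_ hdvd
    rw [pow_mul']
    exact (pow_dvd_pow_of_dvd hN 2).mul_left _
  have h := Int.le_of_dvd (by positivity) ((abs_dvd _ _).mpr hmul)
  rwa [abs_mul, abs_of_nonneg ((even_two_mul k).pow_nonneg N)] at h

end PadeFormBounds

/-- The integral relations encoding that `β = 2 q + √(-B)` has norm `N`, that
`β ^ (2 n + 1) = 2 q C + W √(-B)`, and that `β ^ (4 n + 3)` has the same real part as `β`. The last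
condition is the one involving `C + W`; the integer `e` comes from reducing `β ^ (2 n + 2)`
modulo `N`. -/
structure ExceptionalPower (N B q W C e : ℤ) (n : ℕ) : Prop where
  norm_eq : N = 4 * q ^ 2 + B
  pos : 0 < B
  odd : Odd B
  odd_im : Odd W
  coprime : IsCoprime q N
  norm_pow_eq : 4 * q ^ 2 * C ^ 2 + B * W ^ 2 = N ^ (2 * n + 1)
  re_eq : N * C ^ 2 - B * (C + W) ^ 2 = 1
  re_succ_eq : 4 * q ^ 2 * C - B * W = 2 * q + N * e

namespace ExceptionalPower

variable {N B q W C e : ℤ} {n : ℕ}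

theorem norm_pos (h : ExceptionalPower N B q W C e n) : 0 < N := by
  have := h.pos
  rw [h.norm_eq]
  positivity

theorem isCoprime_two (h : ExceptionalPower N B q W C e n) : IsCoprime 2 N := by
  rw [Int.isCoprime_two_left, h.norm_eq]
  exact Even.add_odd ⟨2 * q ^ 2, by ring⟩ h.odd

theorem odd_e (h : ExceptionalPower N B q W C e n) : Odd e := by
  refine (Int.odd_mul (m := N).mp ?_).2
  rw [show N * e = 2 * (2 * q ^ 2 * C - q) - B * W by linear_combination -h.re_succ_eq]
  exact (even_two_mul _).sub_odd (h.odd.mul h.odd_im)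

theorem norm_pow_succ_eq (h : ExceptionalPower N B q W C e n) :
    (2 * q + N * e) ^ 2 + 4 * q ^ 2 * (B * (C + W) ^ 2) = N ^ (2 * n + 2) := by
  rw [← h.re_succ_eq, pow_succ N, ← h.norm_pow_eq, h.norm_eq]
  ring

theorem mul_eq (h : ExceptionalPower N B q W C e n) : e * (N * e + 4 * q) = B * W ^ 2 := by
  apply mul_left_cancel₀ h.norm_pos.ne'
  have hpow := h.norm_pow_succ_eq
  rw [pow_succ N, ← h.norm_pow_eq] at hpow
  linear_combination hpow + 4 * q ^ 2 * h.re_eq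

theorem isCoprime_B (h : ExceptionalPower N B q W C e n) : IsCoprime B N := by
  rw [show B = N * 1 + -(2 * 2 * q * q) by rw [h.norm_eq]; ring]
  exact ((((h.isCoprime_two.mul_left h.isCoprime_two).mul_left h.coprime).mul_left
    h.coprime).neg_left).mul_add_left_left 1

theorem isCoprime_W (h : ExceptionalPower N B q W C e n) : IsCoprime W N := by
  refine ⟨-2 * B * (C + W), N ^ (2 * n), ?_⟩
  rw [← pow_succ, ← h.norm_pow_eq]
  have hre := h.re_eq
  rw [h.norm_eq] at hre
  linear_combination hre

theorem isCoprime_e (h : ExceptionalPower N B q W C e n) : IsCoprime e N := by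
  refine IsCoprime.of_mul_left_left (y := N * e + 4 * q) ?_
  rw [h.mul_eq]
  exact h.isCoprime_B.mul_left h.isCoprime_W.pow_left

theorem quartic_eq (h : ExceptionalPower N B q W C e n) :
    (⟨B, 1⟩ : ℤ√(N * B)) * ⟨B * W, e⟩ ^ 4 - ⟨B, -1⟩ * ⟨B * W, -e⟩ ^ 4 =
      ⟨0, N ^ (2 * n + 1) * (32 * B ^ 2 * e ^ 2 * q ^ 2)⟩ := by
  obtain ⟨D, hD⟩ : ∃ D, D = 4 * q ^ 2 * C - B * W := ⟨_, rfl⟩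
  have hDe : D = 2 * q + N * e := hD.trans h.re_succ_eq
  have hsq (f : ℤ) (hf : f ^ 2 = e ^ 2) : (⟨B * W, f⟩ : ℤ√(N * B)) ^ 2 =
      ⟨2 * B * e * D, 2 * B * f * W⟩ := by
    ext
    · rw [pow_two, Zsqrtd.re_mul]
      linear_combination N * B * hf - B * h.mul_eq - 2 * B * e * hDe
    · rw [pow_two, Zsqrtd.im_mul]
      ring
  have hfour (f : ℤ) (hf : f ^ 2 = e ^ 2) : (⟨B * W, f⟩ : ℤ√(N * B)) ^ 4 =
      ⟨4 * B ^ 2 * e ^ 2 * (D ^ 2 + N * B * W ^ 2), 8 * B ^ 2 * e * f * D * W⟩ := by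
    rw [show 4 = 2 * 2 from rfl, pow_mul, hsq f hf, pow_two]
    ext
    · rw [Zsqrtd.re_mul]
      linear_combination 4 * N * B ^ 3 * W ^ 2 * hf
    · rw [Zsqrtd.im_mul]
      ring
  have hpow : D ^ 2 + N * B * W ^ 2 + 2 * B * D * W = 4 * q ^ 2 * N ^ (2 * n + 1) := by
    rw [hD, ← h.norm_pow_eq, h.norm_eq]
    ring
  rw [hfour e rfl, hfour (-e) (neg_sq e)]
  ext
  · simp only [Zsqrtd.re_sub, Zsqrtd.re_mul]
    ring
  · simp only [Zsqrtd.im_sub, Zsqrtd.im_mul]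
    linear_combination 8 * B ^ 2 * e ^ 2 * hpow

theorem mul_abs_e_le (h : ExceptionalPower N B q W C e n) :
    N * |e| ≤ N ^ (n + 1) + 2 * |q| := by
  have hB := h.pos
  have hN := h.norm_pos
  have hre : |2 * q + N * e| ≤ N ^ (n + 1) := by
    refine abs_le_of_sq_le_sq ?_ (by positivity)
    rw [← pow_mul, add_mul, one_mul, mul_comm n 2, ← h.norm_pow_succ_eq]
    exact le_add_of_nonneg_right (by positivity)
  calc N * |e| = |2 * q + N * e - 2 * q| := by rw [add_sub_cancel_left, abs_mul, abs_of_pos hN]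
    _ ≤ |2 * q + N * e| + |2 * q| := abs_sub _ _
    _ ≤ N ^ (n + 1) + 2 * |q| := by rw [abs_mul, abs_two]; gcongr

variable {a b : ℝ}

theorem exists_padeForm_eq_and_pow_dvd (h : ExceptionalPower N B q W C e n) (hs : (a + b) ^ 2 = B)
    (ht : (b - a) ^ 2 = N) {k : ℕ} (hk : k ≤ 2 * n + 1) :
    ∃ H : ℤ, padeForm k a b (W : ℝ) e = 2 * (b - a) * ((a + b) ^ (k % 2) * H) ∧
      e ∣ B ^ (k % 2) * H ^ 2 ∧ N ^ k ∣ H := by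
  have hs0 : a + b ≠ 0 := by
    rw [← sq_pos_iff, hs]
    exact_mod_cast h.pos
  have ht0 : b - a ≠ 0 := by
    rw [← sq_pos_iff, ht]
    exact_mod_cast h.norm_pos
  have hab : a * b = ((-q ^ 2 : ℤ) : ℝ) := by
    have hN := congrArg (Int.cast (R := ℝ)) h.norm_eq
    push_cast at hN ⊢
    linear_combination (hs - ht - hN) / 4
  obtain ⟨H, hH, he⟩ := exists_padeForm_eq hs hab (sub_ne_zero.mp ht0).symm hs0 h.odd_im
    h.odd_e (h.mul_eq ▸ dvd_mul_right _ _) k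
  refine ⟨H, hH, he, pow_dvd_of_padeForm_eq hs ht hs0 ht0 h.isCoprime_two h.isCoprime_B hH ?_⟩
  apply pow_dvd_im_padeForm k h.isCoprime_two h.isCoprime_B h.isCoprime_W
  rw [h.quartic_eq, mem_sqrtPowIdeal]
  exact ⟨dvd_zero _, (pow_dvd_pow N hk).mul_right _⟩

theorem padeForm_sq_le (h : ExceptionalPower N B q W C e n) (hs : (a + b) ^ 2 = B)
    (ht : (b - a) ^ 2 = N) (k : ℕ) :
    padeForm k a b (W : ℝ) e ^ 2 ≤ (N / 4) ^ k * (padeJacobi k).eval 1 ^ 2 *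
      (4 * (|(e : ℝ)| * (N * |(e : ℝ)| + 4 * |(q : ℝ)|))) := by
  have hN : (0 : ℝ) < N := by exact_mod_cast h.norm_pos
  have hle : (a + b) ^ 2 ≤ (b - a) ^ 2 := by
    rw [hs, ht, Int.cast_le, h.norm_eq]
    exact le_add_of_nonneg_left (by positivity)
  have hne : b - a ≠ 0 := by
    rw [← sq_pos_iff, ht]
    exact hN
  have hW : ((a + b) * W) ^ 2 = e * (N * e + 4 * q) := by
    rw [mul_pow, hs]
    exact_mod_cast h.mul_eq.symm
  rw [← ht]
  refine _root_.padeForm_sq_le k (sub_ne_zero.mp hne).symm (sq_le_sq.mp hle) ?_ ?_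
  · rw [hW, ht]
    have hqe := le_abs_self ((e : ℝ) * q)
    rw [abs_mul] at hqe
    linear_combination 4 * hqe - N * sq_abs (e : ℝ)
  · have hqe : 0 ≤ |(e : ℝ)| * |(q : ℝ)| := by positivity
    linear_combination 4 * hqe - (b - a) ^ 2 * sq_abs (e : ℝ)

theorem four_pow_mul_pow_le (h : ExceptionalPower N B q W C e n) (hs : (a + b) ^ 2 = B)
    (ht : (b - a) ^ 2 = N) {k : ℕ} (hk : k ≤ 2 * n + 1) (hne : padeForm k a b (W : ℝ) e ≠ 0) :
    4 ^ k * (N : ℝ) ^ k * N ≤ (padeJacobi k).eval 1 ^ 2 * (N * |(e : ℝ)| + 4 * |(q : ℝ)|) := by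
  obtain ⟨H, hH, he, hdvd⟩ := h.exists_padeForm_eq_and_pow_dvd hs ht hk
  have hH0 : H ≠ 0 := by
    rintro rfl
    exact hne (by rw [hH, Int.cast_zero, mul_zero, mul_zero])
  have hN : (0 : ℝ) < N := by exact_mod_cast h.norm_pos
  have he0 : 0 < |(e : ℝ)| := by
    rw [abs_pos, Int.cast_ne_zero]
    rintro rfl
    exact absurd h.odd_e (by decide)
  have hlower : (N : ℝ) ^ (2 * k) * |(e : ℝ)| ≤ B ^ (k % 2) * H ^ 2 := by
    exact_mod_cast pow_mul_abs_le_of_dvd h.pos hH0 h.isCoprime_e hdvd he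
  have hsq : padeForm k a b (W : ℝ) e ^ 2 = 4 * N * (B ^ (k % 2) * H ^ 2) := by
    rw [hH, mul_pow, mul_pow, mul_pow, pow_right_comm, hs, ht]
    ring
  have hupper := h.padeForm_sq_le hs ht k
  rw [hsq, div_pow, div_mul_eq_mul_div, div_mul_eq_mul_div, le_div_iff₀ (by positivity)] at hupper
  refine le_of_mul_le_mul_left ?_ (by positivity : 0 < 4 * (N : ℝ) ^ k * |(e : ℝ)|)
  linear_combination hupper + 4 * N * 4 ^ k * hlower

theorem exists_padeForm_ne_zero (h : ExceptionalPower N B q W C e n) (hne : a ≠ b) :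
    ∃ k, (k = 2 * n ∨ k = 2 * n + 1) ∧ padeForm k a b (W : ℝ) e ≠ 0 := by
  have he : (e : ℝ) ≠ 0 := by
    rw [Int.cast_ne_zero]
    rintro rfl
    exact absurd h.odd_e (by decide)
  by_cases hzero : padeForm (2 * n) a b (W : ℝ) e = 0
  · exact ⟨_, Or.inr rfl, padeForm_succ_ne_zero_of_eq_zero hne _ he hzero⟩
  · exact ⟨_, Or.inl rfl, hzero⟩

/-- With `J = padeJacobi k`, the Padé form gives `4 ^ k N ^ (k + 1) ≤ J (1) ^ 2 N (N ^ n + 1 / 2)`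
for some `k ∈ {2 n, 2 n + 1}`, and this fails for large `N`. -/
theorem norm_lt (h : ExceptionalPower N B q W C e n) (hn : 1 ≤ n) : N < 8192 := by
  by_contra! hlarge
  have hN : (8192 : ℝ) ≤ N := by exact_mod_cast hlarge
  have hB : (0 : ℝ) < B := by exact_mod_cast h.pos
  have hs : ((√B - √N) / 2 + (√B + √N) / 2) ^ 2 = (B : ℝ) := by
    rw [← add_div, sub_add_add_cancel, add_self_div_two, Real.sq_sqrt hB.le]
  have ht : ((√B + √N) / 2 - (√B - √N) / 2) ^ 2 = (N : ℝ) := by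
    rw [← sub_div, add_sub_sub_cancel, add_self_div_two, Real.sq_sqrt (by linarith)]
  have hne : (√B - √N) / 2 ≠ (√B + √N) / 2 := by
    intro heq
    rw [heq, sub_self] at ht
    linarith
  obtain ⟨k, hk, hform⟩ := h.exists_padeForm_ne_zero hne
  have hlower := h.four_pow_mul_pow_le hs ht (by omega) hform
  have hq : 12 * |(q : ℝ)| ≤ N := by
    have hnorm := congrArg (Int.cast (R := ℝ)) h.norm_eq
    push_cast at hnorm
    nlinarith [sq_abs (q : ℝ), abs_nonneg (q : ℝ)]
  have he : (N : ℝ) * |(e : ℝ)| ≤ N ^ (n + 1) + 2 * |(q : ℝ)| := by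
    exact_mod_cast h.mul_abs_e_le
  have hupper : N * |(e : ℝ)| + 4 * |(q : ℝ)| ≤ (N ^ n + 1 / 2) * N := by
    rw [pow_succ] at he
    linarith
  have hlt := padeJacobi_eval_one_sq_mul_lt hN hn hk
  nlinarith [sq_nonneg ((padeJacobi k).eval 1)]

end ExceptionalPower

/-! ### Small norms -/

section LocalObstruction

/-- Multiplication in `(ℤ / ℓ)[√b]` on representatives. -/
def sqrtMulMod (ℓ b : ℕ) (x y : ℕ × ℕ) : ℕ × ℕ :=
  ((x.1 * y.1 + b * (x.2 * y.2)) % ℓ, (x.1 * y.2 + x.2 * y.1) % ℓ)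

/-- The orbit of `x` under multiplication by `u` reaches `start` within `fuel` steps and before that
never has real part `c`. -/
def orbitAvoids (ℓ b c : ℕ) (u start : ℕ × ℕ) : (fuel : ℕ) → (x : ℕ × ℕ) → Bool
  | 0, _ => false
  | fuel + 1, x => x.1 != c &&
      (sqrtMulMod ℓ b x u == start || orbitAvoids ℓ b c u start fuel (sqrtMulMod ℓ b x u))

/-- A local obstruction modulo `ℓ` to `re ((2 q + √(-B)) ^ (4 n + 3)) = 2 q`. The fuel `420` exceeds
the periods that occur in `obstructionCheck`. -/
def localObstruction (q B ℓ : ℕ) : Bool :=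
  let b := (ℓ - 1) * B % ℓ
  let x := (2 * q % ℓ, 1 % ℓ)
  let x2 := sqrtMulMod ℓ b x x
  let x3 := sqrtMulMod ℓ b x2 x
  0 < ℓ && orbitAvoids ℓ b (2 * q % ℓ) (sqrtMulMod ℓ b x2 x2) x3 420 x3

theorem exists_iterate_eq_of_orbitAvoids {ℓ b c : ℕ} {u start : ℕ × ℕ} {fuel : ℕ} {x : ℕ × ℕ}
    (h : orbitAvoids ℓ b c u start fuel x = true) :
    ∃ n, (∀ k ≤ n, ((sqrtMulMod ℓ b · u)^[k] x).1 ≠ c) ∧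
      (sqrtMulMod ℓ b · u)^[n + 1] x = start := by
  induction fuel generalizing x with
  | zero => exact absurd h Bool.false_ne_true
  | succ fuel ih =>
    simp only [orbitAvoids, Bool.and_eq_true, bne_iff_ne, Bool.or_eq_true, beq_iff_eq] at h
    obtain ⟨hx, hstart | htail⟩ := h
    · refine ⟨0, fun k hk => ?_, hstart⟩
      obtain rfl := Nat.le_zero.mp hk
      exact hx
    · obtain ⟨n, hne, hn⟩ := ih htail
      refine ⟨n + 1, fun k hk => ?_, hn⟩
      cases k with
      | zero => exact hx
      | succ k => exact hne k (Nat.le_of_succ_le_succ hk)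

theorem iterate_fst_ne_of_orbitAvoids {ℓ b c : ℕ} {u start : ℕ × ℕ} {fuel : ℕ}
    (h : orbitAvoids ℓ b c u start fuel start = true) (k : ℕ) :
    ((sqrtMulMod ℓ b · u)^[k] start).1 ≠ c := by
  obtain ⟨n, hne, hn⟩ := exists_iterate_eq_of_orbitAvoids h
  have hper : Function.IsPeriodicPt (sqrtMulMod ℓ b · u) (n + 1) start := hn
  rw [← hper.iterate_mod_apply k]
  exact hne _ (Nat.le_of_lt_succ (Nat.mod_lt k n.succ_pos))

/-- `x` is a representative of `z` modulo `ℓ`, with reduced real part. -/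
def IsRepr {d : ℤ} (ℓ : ℕ) (x : ℕ × ℕ) (z : ℤ√d) : Prop :=
  x.1 < ℓ ∧ (x.1 : ZMod ℓ) = z.re ∧ (x.2 : ZMod ℓ) = z.im

namespace IsRepr

variable {d : ℤ} {ℓ b : ℕ} {x y : ℕ × ℕ} {z w : ℤ√d}

theorem mul (hℓ : 0 < ℓ) (hb : (b : ZMod ℓ) = d) (hx : IsRepr ℓ x z) (hy : IsRepr ℓ y w) :
    IsRepr ℓ (sqrtMulMod ℓ b x y) (z * w) := by
  obtain ⟨-, hxre, hxim⟩ := hx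
  obtain ⟨-, hyre, hyim⟩ := hy
  refine ⟨Nat.mod_lt _ hℓ, ?_, ?_⟩
  · simp only [sqrtMulMod, ZMod.natCast_mod, Zsqrtd.re_mul]
    push_cast
    rw [hxre, hxim, hyre, hyim, hb]
    ring
  · simp only [sqrtMulMod, ZMod.natCast_mod, Zsqrtd.im_mul]
    push_cast
    rw [hxre, hxim, hyre, hyim]

theorem iterate (hℓ : 0 < ℓ) (hb : (b : ZMod ℓ) = d) (hx : IsRepr ℓ x z) (hy : IsRepr ℓ y w)
    (k : ℕ) : IsRepr ℓ ((sqrtMulMod ℓ b · y)^[k] x) (z * w ^ k) := by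
  induction k with
  | zero => rwa [pow_zero, mul_one]
  | succ k ih =>
    rw [Function.iterate_succ_apply', pow_succ, ← mul_assoc]
    exact ih.mul hℓ hb hy

theorem fst_eq {c : ℕ} (hx : IsRepr ℓ x z) (hc : z.re = c) : x.1 = c % ℓ := by
  have hmod := (ZMod.natCast_eq_natCast_iff' x.1 c ℓ).mp (by rw [hx.2.1, hc, Int.cast_natCast])
  rwa [Nat.mod_eq_of_lt hx.1] at hmod

end IsRepr

theorem re_pow_ne_of_localObstruction {q B ℓ : ℕ} (h : localObstruction q B ℓ = true) (n : ℕ) :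
    ((⟨2 * q, 1⟩ : ℤ√(-(B : ℤ))) ^ (4 * n + 3)).re ≠ 2 * q := by
  simp only [localObstruction, Bool.and_eq_true, decide_eq_true_eq] at h
  obtain ⟨hℓ, havoids⟩ := h
  have hb : (((ℓ - 1) * B % ℓ : ℕ) : ZMod ℓ) = (-(B : ℤ) : ℤ) := by
    rw [ZMod.natCast_mod, Nat.cast_mul, Nat.cast_sub (Nat.one_le_of_lt hℓ)]
    simp
  have hx : IsRepr ℓ (2 * q % ℓ, 1 % ℓ) (⟨2 * q, 1⟩ : ℤ√(-(B : ℤ))) :=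
    ⟨Nat.mod_lt _ hℓ, by simp, by simp⟩
  have hx2 := hx.mul hℓ hb hx
  have hxn := (hx2.mul hℓ hb hx).iterate hℓ hb (hx2.mul hℓ hb hx2) n
  have hpow (x : ℤ√(-(B : ℤ))) : x * x * x * (x * x * (x * x)) ^ n = x ^ (4 * n + 3) := by ring
  rw [hpow] at hxn
  exact fun hre => iterate_fst_ne_of_orbitAvoids havoids n (hxn.fst_eq (by exact_mod_cast hre))

end LocalObstruction

section SmallNorm

/-- For odd `N < 8192`, a certificate that `N` is not a prime power: a prime `d < √8192` divides `N`
while `N` does not divide `d ^ 13`. -/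
def hasTwoPrimeFactors (N : ℕ) : Bool :=
  [3, 5, 7, 11, 13, 17, 19, 23, 29, 31, 37, 41, 43, 47, 53, 59, 61, 67, 71, 73, 79, 83, 89].any
    fun d => N % d == 0 && d ^ 13 % N != 0

/-- A certificate that `N` is not a prime power, or that every odd prime `q` with `4 q ^ 2 < N` and
`q ∤ N` has a local obstruction with `B = N - 4 q ^ 2`. -/
def obstructionCheck (N : ℕ) : Bool :=
  hasTwoPrimeFactors N ||
    [3, 5, 7, 11, 13, 17, 19, 23, 29, 31, 37, 41, 43].all fun q =>
      N ≤ 4 * q ^ 2 || N % q == 0 ||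
        [16, 5, 13, 17, 29, 41, 37, 53, 61, 73, 89, 97, 101, 109, 113].any
          (localObstruction q (N - 4 * q ^ 2))

/-- The range is split in two levels to keep the recursion of the decision procedure shallow. -/
theorem obstructionCheck_two_mul_add_one :
    ∀ i < 64, ∀ j < 64, obstructionCheck (2 * (64 * i + j) + 1) = true := by
  decide +kernel

theorem obstructionCheck_of_odd {N : ℕ} (hodd : Odd N) (hN : N < 8192) :
    obstructionCheck N = true := by
  obtain ⟨i, rfl⟩ := hodd
  simpa only [Nat.div_add_mod] using
    obstructionCheck_two_mul_add_one (i / 64) (by omega) (i % 64) (Nat.mod_lt _ (by norm_num))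

theorem hasTwoPrimeFactors_prime_pow {p z : ℕ} (hp : p.Prime) (hz : p ^ z < 8192) :
    hasTwoPrimeFactors (p ^ z) = false := by
  have hz13 : z < 13 := by
    rw [← Nat.pow_lt_pow_iff_right (a := 2) one_lt_two]
    exact (Nat.pow_le_pow_left hp.two_le z).trans_lt hz
  rw [hasTwoPrimeFactors, List.any_eq_false]
  intro d hd
  simp only [Bool.and_eq_true, beq_iff_eq, bne_iff_ne, not_and, not_not]
  intro hdvd
  obtain ⟨i, -, rfl⟩ := (Nat.dvd_prime_pow hp).mp (Nat.dvd_of_mod_eq_zero hdvd)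
  rw [← pow_mul]
  apply Nat.mod_eq_zero_of_dvd
  apply pow_dvd_pow
  rcases i.eq_zero_or_pos with rfl | hi
  · rw [pow_zero] at hd
    exact absurd hd (by decide)
  · exact hz13.le.trans (Nat.le_mul_of_pos_left 13 hi)

theorem re_pow_ne_of_prime_pow_lt {p z q B : ℕ} (hp : p.Prime) (hpodd : Odd p) (hq : q.Prime)
    (hqodd : Odd q) (hpq : p ≠ q) (hB : 0 < B) (hN : 4 * q ^ 2 + B = p ^ z) (hlt : p ^ z < 8192)
    (n : ℕ) : ((⟨2 * q, 1⟩ : ℤ√(-(B : ℤ))) ^ (4 * n + 3)).re ≠ 2 * q := by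
  have hcheck := obstructionCheck_of_odd hpodd.pow hlt
  rw [obstructionCheck, hasTwoPrimeFactors_prime_pow hp hlt, Bool.false_or,
    List.all_eq_true] at hcheck
  have hprimes : ∀ q < 46, q.Prime → Odd q →
      q ∈ [3, 5, 7, 11, 13, 17, 19, 23, 29, 31, 37, 41, 43] := by decide
  have hndvd : p ^ z % q ≠ 0 := fun h =>
    hpq ((Nat.prime_dvd_prime_iff_eq hq hp).mp
      (hq.dvd_of_dvd_pow (Nat.dvd_of_mod_eq_zero h))).symm
  have hobstruction := hcheck q (hprimes q (by nlinarith) hq hqodd)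
  rw [← hN, Nat.add_sub_cancel_left, hN] at hobstruction
  simp only [Bool.or_eq_true, decide_eq_true_eq, beq_iff_eq, hndvd, or_false] at hobstruction
  obtain ⟨ℓ, -, hℓ⟩ := List.any_eq_true.mp (hobstruction.resolve_left (by omega))
  exact re_pow_ne_of_localObstruction hℓ n

end SmallNorm

/-! ### Powers in `ℤ√d` -/

section QuadraticInteger

variable {d : ℤ}

theorem add_star_eq_two_mul_re (z : ℤ√d) : z + star z = ((2 * z.re : ℤ) : ℤ√d) := by
  ext <;> simp [two_mul]

theorem zsqrtd_norm_pow (z : ℤ√d) (n : ℕ) : (z ^ n).norm = z.norm ^ n :=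
  map_pow Zsqrtd.normMonoidHom z n

theorem re_dvd_re_pow (z : ℤ√d) {n : ℕ} (hn : Odd n) : z.re ∣ (z ^ n).re := by
  have h := hn.add_dvd_pow_add_pow z (star z)
  rw [← star_pow, add_star_eq_two_mul_re, add_star_eq_two_mul_re,
    Zsqrtd.intCast_dvd_intCast] at h
  exact Int.dvd_of_mul_dvd_mul_left two_ne_zero h

theorem odd_re_pow_iff_and_odd_im_pow_iff (hd : Odd d) {z : ℤ√d} (hre : Even z.re)
    (him : Odd z.im) (n : ℕ) : (Odd (z ^ n).re ↔ Even n) ∧ (Odd (z ^ n).im ↔ Odd n) := by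
  induction n with
  | zero => simp
  | succ n ih =>
    rw [pow_succ, Zsqrtd.re_mul, Zsqrtd.im_mul]
    simp only [Int.odd_add, Int.odd_mul, ih, hd, him, Int.not_odd_iff_even.mpr hre, and_false,
      and_true, true_and, ← Int.not_odd_iff_even, Nat.even_add_one, Nat.odd_add_one, false_iff,
      not_not, not_false_iff, iff_true, Nat.not_even_iff_odd]
    exact Nat.not_odd_iff_even.symm

theorem odd_re_pow_iff (hd : Odd d) {z : ℤ√d} (hre : Even z.re) (him : Odd z.im) {n : ℕ} :
    Odd (z ^ n).re ↔ Even n :=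
  (odd_re_pow_iff_and_odd_im_pow_iff hd hre him n).1

theorem odd_im_pow_iff (hd : Odd d) {z : ℤ√d} (hre : Even z.re) (him : Odd z.im) {n : ℕ} :
    Odd (z ^ n).im ↔ Odd n :=
  (odd_re_pow_iff_and_odd_im_pow_iff hd hre him n).2

theorem odd_re_even_im_pow {z : ℤ√d} (hre : Odd z.re) (him : Even z.im) (n : ℕ) :
    Odd (z ^ n).re ∧ Even (z ^ n).im := by
  induction n with
  | zero => simp
  | succ n ih =>
    rw [pow_succ, Zsqrtd.re_mul, Zsqrtd.im_mul]
    exact ⟨(ih.1.mul hre).add_even (him.mul_left _),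
      (him.mul_left _).add (ih.2.mul_right _)⟩

theorem pow_eq_rescale {B m r : ℤ} (hB : B = d * m ^ 2) (n : ℕ) :
    (⟨r, m⟩ : ℤ√d) ^ n = ⟨((⟨r, 1⟩ : ℤ√B) ^ n).re, m * ((⟨r, 1⟩ : ℤ√B) ^ n).im⟩ := by
  induction n with
  | zero => ext <;> simp
  | succ n ih =>
    rw [pow_succ, ih, pow_succ]
    ext
    · simp only [Zsqrtd.re_mul]
      rw [hB]
      ring
    · simp only [Zsqrtd.im_mul]
      ring

theorem eq_of_norm_eq_one (hd : 0 < d) {ε : ℤ√(-d)} (h : ε.norm = 1) :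
    (ε = 1 ∨ ε = -1) ∨ d = 1 ∧ ε.re = 0 ∧ (ε.im = 1 ∨ ε.im = -1) := by
  rw [Zsqrtd.norm_def] at h
  have him : ε.im = 0 ∨ ε.im = 1 ∨ ε.im = -1 := by
    have hsq : ε.im ^ 2 ≤ 1 := by nlinarith [sq_nonneg ε.re, sq_nonneg ε.im]
    have hle : ε.im ≤ 1 := by nlinarith
    have hge : -1 ≤ ε.im := by nlinarith
    omega
  rcases him with him | him
  · rw [him] at h
    left
    exact (sq_eq_one_iff.mp (by linarith : ε.re ^ 2 = 1)).imp
      (fun hre => Zsqrtd.ext hre him) (fun hre => Zsqrtd.ext hre him)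
  · have hsq : ε.im * ε.im = 1 := by rcases him with him | him <;> rw [him] <;> norm_num
    have hsum : ε.re * ε.re + d = 1 := by linear_combination h - d * hsq
    have hd1 : d = 1 := by nlinarith [mul_self_nonneg ε.re]
    exact Or.inr ⟨hd1, mul_self_eq_zero.mp (by linarith), him⟩

theorem pow_gcd_add_pow_gcd_eq_zero {R : Type*} [CommRing R] {a b c : R} (h : a * b * c = 1)
    {m n : ℕ} (hm : Odd m) (hn : Odd n) (hm0 : a ^ m + b ^ m = 0) (hn0 : a ^ n + b ^ n = 0) :
    a ^ m.gcd n + b ^ m.gcd n = 0 := by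
  have hunit (k : ℕ) : a ^ k * b ^ k * c ^ k = 1 := by rw [← mul_pow, ← mul_pow, h, one_pow]
  have hone_iff {k : ℕ} (hk : Odd k) : a ^ k + b ^ k = 0 ↔ (-(c * a ^ 2)) ^ k = 1 := by
    rw [hk.neg_pow, mul_pow, pow_right_comm]
    constructor
    · intro hab
      linear_combination hunit k - c ^ k * a ^ k * hab
    · intro hone
      linear_combination (-b ^ k) * hone - a ^ k * hunit k
  exact (hone_iff (hm.of_dvd_nat (m.gcd_dvd_left n))).mpr
    (pow_gcd_eq_one.mpr ⟨(hone_iff hm).mp hm0, (hone_iff hn).mp hn0⟩)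

theorem dvd_re_pow_gcd {q : ℤ} (hq : Prime q) (hq2 : ¬ q ∣ 2) {z : ℤ√d}
    (hz : IsCoprime q z.norm) {m n : ℕ} (hm : Odd m) (hn : Odd n) (hqm : q ∣ (z ^ m).re)
    (hqn : q ∣ (z ^ n).re) : q ∣ (z ^ m.gcd n).re := by
  let π := Ideal.Quotient.mk (Ideal.span {(q : ℤ√d)})
  have hπ (k : ℕ) : q ∣ 2 * (z ^ k).re ↔ π z ^ k + π (star z) ^ k = 0 := by
    rw [← map_pow, ← map_pow, ← map_add, Ideal.Quotient.eq_zero_iff_mem,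
      Ideal.mem_span_singleton, ← star_pow, add_star_eq_two_mul_re,
      Zsqrtd.intCast_dvd_intCast]
  obtain ⟨u, v, huv⟩ := hz
  have hunit : π z * π (star z) * π (v : ℤ√d) = 1 := by
    rw [← map_mul, ← map_mul, ← map_one π, Ideal.Quotient.eq, Ideal.mem_span_singleton,
      ← Zsqrtd.norm_eq_mul_conj]
    have hbezout := congrArg (Int.cast : ℤ → ℤ√d) huv
    push_cast at hbezout
    exact ⟨-(u : ℤ√d), by linear_combination hbezout⟩
  have hgcd := (hπ _).mpr (pow_gcd_add_pow_gcd_eq_zero hunit hm hn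
    ((hπ m).mp (hqm.mul_left 2)) ((hπ n).mp (hqn.mul_left 2)))
  exact (hq.dvd_or_dvd hgcd).resolve_left hq2

end QuadraticInteger

section Generator

variable {d p : ℤ} {α β γ : ℤ√d} {a b : ℕ}

theorem exists_eq_mul_of_pow_dvd_im (hp : p ≠ 0) (hab : a ≤ b) (hα : α.norm = p ^ a)
    (hβ : β.norm = p ^ b) (him : p ^ a ∣ (β * star α).im) :
    ∃ γ, β = γ * α ∧ γ.norm = p ^ (b - a) := by
  have hre : p ^ a ∣ (β * star α).re := by
    rw [← Int.pow_dvd_pow_iff two_ne_zero]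
    have hsq : (β * star α).re ^ 2 = p ^ b * p ^ a + d * (β * star α).im ^ 2 := by
      rw [← hα, ← hβ, ← Zsqrtd.norm_conj α, ← Zsqrtd.norm_mul, Zsqrtd.norm_def (β * star α)]
      ring
    rw [hsq, sq (p ^ a)]
    exact dvd_add (mul_dvd_mul_right (pow_dvd_pow p hab) _)
      ((sq (p ^ a) ▸ pow_dvd_pow_of_dvd him 2).mul_left d)
  obtain ⟨γ, hγ⟩ := (Zsqrtd.intCast_dvd _ _).mpr ⟨hre, him⟩
  have hβγ : β = γ * α := by
    apply Zsqrtd.eq_of_smul_eq_smul_left (pow_ne_zero a hp)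
    rw [← mul_assoc, ← hγ, mul_assoc, mul_comm (star α), ← Zsqrtd.norm_eq_mul_conj, hα, mul_comm]
  refine ⟨γ, hβγ, mul_right_cancel₀ (pow_ne_zero a hp) ?_⟩
  rw [← pow_add, Nat.sub_add_cancel hab, ← hβ, hβγ, Zsqrtd.norm_mul, hα]

theorem dvd_re_mul_of_dvd_re (hp : Prime p) (hnorm : p ∣ γ.norm) (hre : p ∣ γ.re) :
    p ∣ (γ * α).re := by
  have hsq : p ∣ d * γ.im * γ.im := by
    rw [show d * γ.im * γ.im = γ.re * γ.re - γ.norm by rw [Zsqrtd.norm_def]; ring]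
    exact dvd_sub (hre.mul_right _) hnorm
  have him : p ∣ d * γ.im := (hp.dvd_or_dvd hsq).elim id fun h => h.mul_left d
  rw [Zsqrtd.re_mul]
  exact dvd_add (hre.mul_right _) (him.mul_right _)

theorem dvd_re_of_dvd_im (hp : Prime p) (hnorm : p ∣ α.norm) (him : p ∣ α.im) : p ∣ α.re := by
  refine hp.dvd_of_dvd_pow (n := 2) ?_
  rw [show α.re ^ 2 = α.norm + d * α.im * α.im by rw [Zsqrtd.norm_def]; ring]
  exact dvd_add hnorm (him.mul_left _)

theorem im_mul_star_mul_im_mul (α β : ℤ√d) :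
    (β * star α).im * (β * α).im = β.im ^ 2 * α.norm - α.im ^ 2 * β.norm := by
  simp only [Zsqrtd.norm_def, Zsqrtd.im_mul, Zsqrtd.re_star, Zsqrtd.im_star]
  ring

theorem im_mul_sub_im_mul_star (α β : ℤ√d) :
    (β * α).im - (β * star α).im = 2 * (β.re * α.im) := by
  simp only [Zsqrtd.im_mul, Zsqrtd.re_star, Zsqrtd.im_star]
  ring

theorem exists_eq_mul_or_eq_mul_star (hp : Prime p) (hp2 : ¬ p ∣ 2) (ha : 0 < a) (hab : a ≤ b)
    (hα : α.norm = p ^ a) (hβ : β.norm = p ^ b) (hpα : ¬ p ∣ α.re) (hpβ : ¬ p ∣ β.re) :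
    ∃ γ, (β = γ * α ∨ β = γ * star α) ∧ γ.norm = p ^ (b - a) := by
  have hprod : p ^ a ∣ (β * star α).im * (β * α).im := by
    rw [im_mul_star_mul_im_mul, hα, hβ]
    exact dvd_sub (dvd_mul_left _ _) ((pow_dvd_pow p hab).mul_left _)
  have hpαim : ¬ p ∣ α.im := fun h =>
    hpα (dvd_re_of_dvd_im hp (hα ▸ dvd_pow_self p ha.ne') h)
  have hnot_both : p ∣ (β * star α).im → ¬ p ∣ (β * α).im := by
    intro hstar hmul
    have hsub := dvd_sub hmul hstar
    rw [im_mul_sub_im_mul_star] at hsub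
    exact (hp.dvd_or_dvd hsub).elim hp2 fun h => (hp.dvd_or_dvd h).elim hpβ hpαim
  by_cases hstar : p ∣ (β * star α).im
  · obtain ⟨γ, hβγ, hγ⟩ := exists_eq_mul_of_pow_dvd_im hp.ne_zero hab hα hβ
      (hp.pow_dvd_of_dvd_mul_right a (hnot_both hstar) hprod)
    exact ⟨γ, Or.inl hβγ, hγ⟩
  · obtain ⟨γ, hβγ, hγ⟩ := exists_eq_mul_of_pow_dvd_im (α := star α) hp.ne_zero hab
      (by rw [Zsqrtd.norm_conj, hα]) hβ
      (by rw [star_star]; exact hp.pow_dvd_of_dvd_mul_left a hstar hprod)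
    exact ⟨γ, Or.inr hβγ, hγ⟩

theorem exists_norm_eq_pow_forall_eq_mul_pow (hp : Prime p) (hp2 : ¬ p ∣ 2)
    (hex : ∃ b, 0 < b ∧ ∃ β : ℤ√d, β.norm = p ^ b ∧ ¬ p ∣ β.re) :
    ∃ (α : ℤ√d) (a : ℕ), α.norm = p ^ a ∧
      ∀ b, 0 < b → ∀ β : ℤ√d, β.norm = p ^ b → ¬ p ∣ β.re →
        ∃ (ε : ℤ√d) (n : ℕ), ε.norm = 1 ∧ (β = ε * α ^ (n + 1) ∨ β = ε * star α ^ (n + 1)) := by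
  classical
  obtain ⟨ha, α, hα, hpα⟩ := Nat.find_spec hex
  have hmin : ∀ b, 0 < b → ∀ β : ℤ√d, β.norm = p ^ b → ¬ p ∣ β.re → Nat.find hex ≤ b :=
    fun b hb β hβ hpβ => Nat.find_min' hex ⟨hb, β, hβ, hpβ⟩
  obtain ⟨a, haeq⟩ : ∃ a, a = Nat.find hex := ⟨_, rfl⟩
  rw [← haeq] at ha hα hmin
  refine ⟨α, a, hα, ?_⟩
  have hmixed (w : ℤ√d) : p ∣ (w * (α * star α)).re := by
    rw [← Zsqrtd.norm_eq_mul_conj, hα, mul_comm, Zsqrtd.re_smul]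
    exact (dvd_pow_self p ha.ne').mul_right _
  intro b
  induction b using Nat.strong_induction_on with
  | _ b ih =>
    intro hb β hβ hpβ
    have hab := hmin b hb β hβ hpβ
    obtain ⟨γ, hβγ, hγ⟩ := exists_eq_mul_or_eq_mul_star hp hp2 ha hab hα hβ hpα hpβ
    rcases hab.eq_or_lt with rfl | hlt
    · exact ⟨γ, 0, by rw [hγ, Nat.sub_self, pow_zero], by simpa only [zero_add, pow_one] using hβγ⟩
    · have hpγ : ¬ p ∣ γ.re := fun h => hpβ <| by
        have hdvd : p ∣ γ.norm := hγ ▸ dvd_pow_self p (Nat.sub_ne_zero_of_lt hlt)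
        rcases hβγ with rfl | rfl <;> exact dvd_re_mul_of_dvd_re hp hdvd h
      obtain ⟨ε, n, hε, hγε⟩ := ih (b - a) (by omega) (by omega) γ hγ hpγ
      refine ⟨ε, n + 1, hε, ?_⟩
      rcases hβγ with rfl | rfl <;> rcases hγε with rfl | rfl
      · exact Or.inl (by ring)
      · exact (hpβ (by convert hmixed (ε * star α ^ n) using 2; ring)).elim
      · exact (hpβ (by convert hmixed (ε * α ^ n) using 2; ring)).elim
      · exact Or.inr (by ring)

end Generator

/-! ### Odd powers with the same real part -/

section OddPower

theorem norm_pow_eq_re_sq_sub_im_sq {d : ℤ} (z : ℤ√d) (m : ℕ) :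
    z.norm ^ m = (z ^ m).re ^ 2 - d * (z ^ m).im ^ 2 := by
  rw [← zsqrtd_norm_pow, Zsqrtd.norm_def]
  ring

theorem re_pow_two_mul_add_one {d : ℤ} (z : ℤ√d) (m : ℕ) :
    (z ^ (2 * m + 1)).re = z.re * ((z ^ m).re ^ 2 + d * (z ^ m).im ^ 2) +
      2 * d * ((z ^ m).re * (z ^ m).im * z.im) := by
  rw [pow_succ, mul_comm 2 m, pow_mul, pow_two]
  simp only [Zsqrtd.re_mul, Zsqrtd.im_mul]
  ring

theorem exists_im_pow_eq_two_pow_mul {d w : ℤ} {z : ℤ√d} {s : ℕ} (hre : Odd z.re) (hw : Odd w)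
    (him : z.im = 2 ^ (s + 1) * w) (n : ℕ) :
    ∃ v : ℤ, (z ^ n).im = 2 ^ (s + 1) * v ∧ (Odd v ↔ Odd n) := by
  have heven : Even z.im := by
    rw [him, pow_succ']
    exact (even_two.mul_right _).mul_right _
  induction n with
  | zero => exact ⟨0, by simp⟩
  | succ n ih =>
    obtain ⟨v, hv, hvn⟩ := ih
    have hren := (odd_re_even_im_pow hre heven n).1
    refine ⟨(z ^ n).re * w + v * z.re, ?_, ?_⟩
    · rw [pow_succ, Zsqrtd.im_mul, hv, him]
      ring
    · rw [add_comm, Int.odd_add', Int.odd_mul, Nat.odd_add_one, ← Int.not_odd_iff_even,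
        Int.odd_mul, hvn]
      simp only [hren, hw, hre, and_self, and_true, true_iff]

theorem exists_im_pow_two_pow_mul_eq {d w : ℤ} {z : ℤ√d} {s : ℕ} (hre : Odd z.re) (hw : Odd w)
    (him : z.im = 2 ^ (s + 1) * w) {o : ℕ} (ho : Odd o) (j : ℕ) :
    ∃ v : ℤ, Odd v ∧ (z ^ (2 ^ j * o)).im = 2 ^ (s + 1 + j) * v := by
  have heven : Even z.im := by
    rw [him, pow_succ']
    exact (even_two.mul_right _).mul_right _
  induction j with
  | zero =>
    obtain ⟨v, hv, hodd⟩ := exists_im_pow_eq_two_pow_mul hre hw him o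
    exact ⟨v, hodd.mpr ho, by rw [pow_zero, one_mul, hv, add_zero]⟩
  | succ j ih =>
    obtain ⟨v, hv, hvj⟩ := ih
    refine ⟨(z ^ (2 ^ j * o)).re * v, (odd_re_even_im_pow hre heven _).1.mul hv, ?_⟩
    rw [pow_succ 2 j, mul_right_comm, pow_mul, pow_two, Zsqrtd.im_mul, hvj]
    ring

theorem two_pow_dvd_pow_sub_one {N : ℤ} (hN : Odd N) (j o : ℕ) :
    (2 : ℤ) ^ (j + 3) ∣ N ^ (2 ^ (j + 1) * o) - 1 := by
  have hdvd : (2 : ℤ) ^ (j + 3) ∣ N ^ 2 ^ (j + 1) - 1 := by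
    induction j with
    | zero => exact Int.eight_dvd_sq_sub_one_of_odd hN
    | succ j ih =>
      rw [show N ^ 2 ^ (j + 1 + 1) - 1 = (N ^ 2 ^ (j + 1) - 1) * (N ^ 2 ^ (j + 1) + 1) by ring,
        show j + 1 + 3 = j + 3 + 1 by ring, pow_succ]
      exact mul_dvd_mul ih (hN.pow.add_odd odd_one).two_dvd
  rw [pow_mul]
  exact hdvd.trans (sub_one_dvd_pow_sub_one _ _)

theorem exists_im_pow_two_pow_mul_succ_eq {B q : ℤ} (hB : Odd B) (hq : Odd q) {o : ℕ}
    (ho : Odd o) (j : ℕ) :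
    ∃ v : ℤ, Odd v ∧ ((⟨2 * q, 1⟩ : ℤ√(-B)) ^ (2 ^ (j + 1) * o)).im = 2 ^ (j + 2) * v := by
  have hsq : (⟨2 * q, 1⟩ : ℤ√(-B)) ^ 2 = ⟨4 * q ^ 2 - B, 2 ^ (1 + 1) * q⟩ := by
    rw [pow_two]
    ext
    · rw [Zsqrtd.re_mul]
      ring
    · rw [Zsqrtd.im_mul]
      ring
  rw [pow_succ' 2 j, mul_assoc, pow_mul, add_comm j 2, hsq]
  exact exists_im_pow_two_pow_mul_eq (Even.sub_odd ⟨2 * q ^ 2, by ring⟩ hB) hq rfl ho j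

theorem mul_norm_pow_sub_one_eq {B q : ℤ} {m : ℕ}
    (hre : ((⟨2 * q, 1⟩ : ℤ√(-B)) ^ (2 * m + 1)).re = 2 * q) :
    q * ((4 * q ^ 2 + B) ^ m - 1) = ((⟨2 * q, 1⟩ : ℤ√(-B)) ^ m).im * (B *
      (((⟨2 * q, 1⟩ : ℤ√(-B)) ^ m).re + 2 * q * ((⟨2 * q, 1⟩ : ℤ√(-B)) ^ m).im)) := by
  rw [re_pow_two_mul_add_one] at hre
  have hnorm := norm_pow_eq_re_sq_sub_im_sq (⟨2 * q, 1⟩ : ℤ√(-B)) m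
  rw [Zsqrtd.norm_def, show 2 * q * (2 * q) - -B * 1 * 1 = 4 * q ^ 2 + B by ring] at hnorm
  rw [hnorm]
  linarith

/-- The two sides of `mul_norm_pow_sub_one_eq` have different `2`-adic valuations. -/
theorem re_pow_two_mul_add_one_ne_of_even {B q : ℤ} (hB : Odd B) (hq : Odd q) {m : ℕ}
    (hm : Even m) (hm0 : m ≠ 0) : ((⟨2 * q, 1⟩ : ℤ√(-B)) ^ (2 * m + 1)).re ≠ 2 * q := by
  intro hre
  obtain ⟨k, o, ho, hmo⟩ := Nat.exists_eq_two_pow_mul_odd hm0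
  obtain ⟨j, rfl⟩ : ∃ j, k = j + 1 := by
    refine Nat.exists_eq_succ_of_ne_zero ?_
    rintro rfl
    rw [hmo, pow_zero, one_mul] at hm
    exact Nat.not_even_iff_odd.mpr ho hm
  obtain ⟨v, hv, him⟩ := exists_im_pow_two_pow_mul_succ_eq hB hq ho j
  rw [← hmo] at him
  have hN : Odd (4 * q ^ 2 + B) := Even.add_odd ⟨2 * q ^ 2, by ring⟩ hB
  have hdvd := (two_pow_dvd_pow_sub_one hN j o).mul_left q
  rw [← hmo, mul_norm_pow_sub_one_eq hre, him, mul_assoc, pow_succ _ (j + 2)] at hdvd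
  have heven := even_iff_two_dvd.mpr
    (Int.dvd_of_mul_dvd_mul_left (pow_ne_zero _ two_ne_zero) hdvd)
  have hodd : Odd ((⟨2 * q, 1⟩ : ℤ√(-B)) ^ m).re :=
    (odd_re_pow_iff hB.neg (even_two_mul q) odd_one).mpr hm
  rw [mul_assoc] at heven
  exact Int.not_even_iff_odd.mpr
    (hv.mul (hB.mul (hodd.add_even (even_two_mul _)))) heven

theorem prime_pow_dvd_sub_or_dvd_add {p a b : ℤ} (hp : Prime p) {z : ℕ} (hb : ¬ p ∣ 2 * b)
    (h : p ^ z ∣ (a - b) * (a + b)) : p ^ z ∣ a - b ∨ p ^ z ∣ a + b := by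
  have hnot_both : p ∣ a - b → ¬ p ∣ a + b := fun hsub hadd =>
    hb (by rw [show 2 * b = a + b - (a - b) by ring]; exact dvd_sub hadd hsub)
  by_cases hsub : p ∣ a - b
  · exact Or.inl (hp.pow_dvd_of_dvd_mul_right z (hnot_both hsub) h)
  · exact Or.inr (hp.pow_dvd_of_dvd_mul_left z hsub h)

theorem re_pow_three_ne {p q B : ℤ} {z : ℕ} (hp : Prime p) (hp2 : ¬ p ∣ 2) (hq : 2 ≤ q)
    (hB : 0 < B) (hN : p ^ z = 4 * q ^ 2 + B) : ((⟨2 * q, 1⟩ : ℤ√(-B)) ^ 3).re ≠ 2 * q := by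
  intro hre
  rw [show 3 = 2 * 1 + 1 from rfl, re_pow_two_mul_add_one, pow_one] at hre
  have hB3 : 4 * q ^ 2 - 3 * B = 1 :=
    mul_left_cancel₀ (by positivity : 2 * q ≠ 0) (by linear_combination hre)
  have hdvd : p ^ z ∣ (4 * q - 1) * (4 * q + 1) := ⟨3, by rw [hN]; linear_combination hB3⟩
  have hlt : 4 * q + 1 < p ^ z := by
    rw [hN]
    nlinarith
  rcases prime_pow_dvd_sub_or_dvd_add hp (by rwa [mul_one]) hdvd with h | h
  · linarith [Int.le_of_dvd (by linarith) h]
  · linarith [Int.le_of_dvd (by linarith) h]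

theorem exists_exceptionalPower {p q B : ℤ} {z n : ℕ} (hp : Prime p) (hp2 : ¬ p ∣ 2)
    (hpq : ¬ p ∣ q) (hq : q ≠ 0) (hB : 0 < B) (hBodd : Odd B) (hN : p ^ z = 4 * q ^ 2 + B)
    (hre : ((⟨2 * q, 1⟩ : ℤ√(-B)) ^ (4 * n + 3)).re = 2 * q) :
    ∃ q' W C e : ℤ, ExceptionalPower (p ^ z) B q' W C e n := by
  rw [show 4 * n + 3 = 2 * (2 * n + 1) + 1 by ring, re_pow_two_mul_add_one] at hre
  obtain ⟨C, hC⟩ := re_dvd_re_pow (⟨2 * q, 1⟩ : ℤ√(-B)) (odd_two_mul_add_one n)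
  have hodd : Odd ((⟨2 * q, 1⟩ : ℤ√(-B)) ^ (2 * n + 1)).im :=
    (odd_im_pow_iff hBodd.neg (even_two_mul q) odd_one).mpr (odd_two_mul_add_one n)
  have hnorm := norm_pow_eq_re_sq_sub_im_sq (⟨2 * q, 1⟩ : ℤ√(-B)) (2 * n + 1)
  rw [Zsqrtd.norm_def] at hnorm
  simp only [hC] at hre hnorm
  obtain ⟨W, hW⟩ : ∃ W, W = ((⟨2 * q, 1⟩ : ℤ√(-B)) ^ (2 * n + 1)).im := ⟨_, rfl⟩
  rw [← hW] at hre hnorm hodd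
  have hnorm_pow : 4 * q ^ 2 * C ^ 2 + B * W ^ 2 = (p ^ z) ^ (2 * n + 1) := by
    rw [hN]
    convert hnorm.symm using 1 <;> ring
  have hre_one : 4 * q ^ 2 * C ^ 2 - 2 * B * C * W - B * W ^ 2 = 1 :=
    mul_left_cancel₀ (mul_ne_zero two_ne_zero hq) (by linear_combination hre)
  have hre_eq : p ^ z * C ^ 2 - B * (C + W) ^ 2 = 1 := by
    rw [hN]
    linear_combination hre_one
  have hcop : IsCoprime q (p ^ z) := ((hp.coprime_iff_not_dvd.mpr hpq).symm).pow_right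
  have hdvd : p ^ z ∣ (4 * q ^ 2 * C - B * W - 2 * q) * (4 * q ^ 2 * C - B * W + 2 * q) :=
    ⟨B * W ^ 2, by rw [hN]; linear_combination 4 * q ^ 2 * hre_one⟩
  have hpq2 : ¬ p ∣ 2 * (2 * q) := fun h =>
    (hp.dvd_or_dvd h).elim hp2 fun h => (hp.dvd_or_dvd h).elim hp2 hpq
  rcases prime_pow_dvd_sub_or_dvd_add hp hpq2 hdvd with ⟨e, he⟩ | ⟨e, he⟩
  · exact ⟨q, W, C, e, hN, hB, hBodd, hodd, hcop, hnorm_pow, hre_eq, by linear_combination he⟩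
  · exact ⟨-q, W, C, e, by rw [neg_sq, hN], hB, hBodd, hodd, hcop.neg_left,
      by rw [neg_sq, hnorm_pow], hre_eq, by linear_combination he⟩

theorem not_dvd_two_of_odd {p : ℤ} (hp : Prime p) (hodd : Odd p) : ¬ p ∣ 2 := fun h =>
  hp.not_isUnit ((Int.isCoprime_two_right.mpr hodd).isUnit_of_dvd h)

theorem re_pow_two_mul_add_one_ne {p z q B : ℕ} (hp : p.Prime) (hpodd : Odd p) (hq : q.Prime)
    (hqodd : Odd q) (hpq : p ≠ q) (hB : 0 < B) (hBodd : Odd B) (hN : 4 * q ^ 2 + B = p ^ z)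
    {m : ℕ} (hm : m ≠ 0) : ((⟨2 * q, 1⟩ : ℤ√(-(B : ℤ))) ^ (2 * m + 1)).re ≠ 2 * q := by
  intro hre
  have hpZ : Prime (p : ℤ) := Nat.prime_iff_prime_int.mp hp
  have hp2 : ¬ (p : ℤ) ∣ 2 := not_dvd_two_of_odd hpZ (by exact_mod_cast hpodd)
  have hpq' : ¬ (p : ℤ) ∣ q := fun h =>
    hpq ((Nat.prime_dvd_prime_iff_eq hp hq).mp (Int.natCast_dvd_natCast.mp h))
  have hBZ : Odd (B : ℤ) := by exact_mod_cast hBodd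
  have hB0 : (0 : ℤ) < B := by exact_mod_cast hB
  have hNZ : (p : ℤ) ^ z = 4 * q ^ 2 + B := by exact_mod_cast hN.symm
  rcases Nat.even_or_odd m with hmeven | ⟨n, rfl⟩
  · exact re_pow_two_mul_add_one_ne_of_even hBZ (by exact_mod_cast hqodd) hmeven hm hre
  rcases n.eq_zero_or_pos with rfl | hn
  · exact re_pow_three_ne hpZ hp2 (by exact_mod_cast hq.two_le) hB0 hNZ hre
  have hre' : ((⟨2 * q, 1⟩ : ℤ√(-(B : ℤ))) ^ (4 * n + 3)).re = 2 * q := by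
    convert hre using 3
    ring
  obtain ⟨q', W, C, e, h⟩ :=
    exists_exceptionalPower hpZ hp2 hpq' (by exact_mod_cast hq.ne_zero) hB0 hBZ hNZ hre'
  exact re_pow_ne_of_prime_pow_lt hp hpodd hq hqodd hpq hB hN (by exact_mod_cast h.norm_lt hn) n
    hre'

end OddPower

section FermatQuotient

theorem exists_re_pow_prime_eq {d : ℤ} (z : ℤ√d) {r : ℕ} (hr : r.Prime) (hodd : Odd r) :
    ∃ w : ℤ, (z ^ r).re = z.re ^ r + r * z.re * w := by
  obtain ⟨w, hw⟩ := exists_add_pow_prime_eq hr (z.re : ℤ√d) ⟨0, z.im⟩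
  have hz : (z.re : ℤ√d) + ⟨0, z.im⟩ = z := by ext <;> simp
  have him : ((⟨0, z.im⟩ : ℤ√d) ^ r).re = 0 := zero_dvd_iff.mp (re_dvd_re_pow ⟨0, z.im⟩ hodd)
  refine ⟨((⟨0, z.im⟩ : ℤ√d) * w).re, ?_⟩
  have hcast : (r : ℤ√d) * z.re * ⟨0, z.im⟩ * w =
      ((r * z.re : ℤ) : ℤ√d) * (⟨0, z.im⟩ * w) := by
    push_cast
    ring
  rw [hz, hcast, ← Int.cast_pow] at hw
  rw [hw, Zsqrtd.re_add, Zsqrtd.re_add, Zsqrtd.re_intCast, him, Zsqrtd.re_smul, add_zero]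

theorem re_pow_prime_ne_neg {d : ℤ} {z : ℤ√d} (hz : z.re ≠ 0) {r : ℕ} (hr : r.Prime)
    (hodd : Odd r) : (z ^ r).re ≠ -z.re := by
  intro h
  have hrZ : Prime (r : ℤ) := Nat.prime_iff_prime_int.mp hr
  obtain ⟨w, hw⟩ := exists_re_pow_prime_eq z hr hodd
  have hsum : z.re ^ (r - 1) + r * w = -1 := by
    apply mul_left_cancel₀ hz
    rw [mul_add, mul_pow_sub_one hr.ne_zero]
    linear_combination h - hw
  by_cases hdvd : (r : ℤ) ∣ z.re
  · have hone : (r : ℤ) ∣ -1 := hsum ▸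
      dvd_add (hdvd.pow (Nat.sub_ne_zero_of_lt hr.one_lt)) (dvd_mul_right _ _)
    exact hrZ.not_isUnit (isUnit_of_dvd_unit hone isUnit_one.neg)
  · have hfermat := (Int.ModEq.pow_card_sub_one_eq_one hr
      (hrZ.coprime_iff_not_dvd.mpr hdvd).symm).symm.dvd
    apply not_dvd_two_of_odd hrZ (by exact_mod_cast hodd)
    rw [show (2 : ℤ) = -(z.re ^ (r - 1) - 1) - r * w by linear_combination hsum]
    exact dvd_sub (dvd_neg.mpr hfermat) (dvd_mul_right _ _)

end FermatQuotient

section ExponentUnique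

variable {p q : ℕ}

theorem eq_one_of_re_pow_dvd {z B : ℕ} (hp : p.Prime) (hpodd : Odd p) (hq : q.Prime)
    (hqodd : Odd q) (hpq : p ≠ q) (hB : 0 < B) (hBodd : Odd B) (hN : 4 * q ^ 2 + B = p ^ z)
    {t : ℕ} (ht : Odd t) (h : ((⟨2 * q, 1⟩ : ℤ√(-(B : ℤ))) ^ t).re ∣ 2 * q) : t = 1 := by
  by_contra ht1
  obtain ⟨r, hr, s, rfl⟩ := Nat.exists_prime_and_dvd ht1
  obtain ⟨hrodd, hsodd⟩ := Nat.odd_mul.mp ht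
  rw [pow_mul] at h
  have hassoc := associated_of_dvd_dvd ((re_dvd_re_pow _ hsodd).trans h)
    (re_dvd_re_pow (⟨2 * q, 1⟩ : ℤ√(-(B : ℤ))) hrodd)
  rcases Int.associated_iff.mp hassoc with heq | hneg
  · obtain ⟨m, rfl⟩ := hrodd
    have hm : m ≠ 0 := by
      rintro rfl
      exact Nat.not_prime_one hr
    exact re_pow_two_mul_add_one_ne hp hpodd hq hqodd hpq hB hBodd hN hm heq
  · have hq0 : 2 * (q : ℤ) ≠ 0 := by exact_mod_cast mul_ne_zero two_ne_zero hq.ne_zero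
    exact re_pow_prime_ne_neg hq0 hr hrodd hneg

variable {d : ℤ} {α γ : ℤ√(-d)} {c : ℕ}

theorem eq_one_of_re_eq_of_re_pow_dvd (hd : 0 < d) (hdodd : Odd d) (hp : p.Prime)
    (hpodd : Odd p) (hq : q.Prime) (hqodd : Odd q) (hpq : p ≠ q) (hγ : γ.norm = (p : ℤ) ^ c)
    (hre : γ.re = 2 * q) (him : Odd γ.im) {t : ℕ} (ht : Odd t) (h : (γ ^ t).re ∣ 2 * q) :
    t = 1 := by
  obtain ⟨r, m⟩ := γ
  obtain rfl : r = 2 * q := hre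
  have hm : m ≠ 0 := by
    rintro rfl
    exact Int.not_odd_zero him
  obtain ⟨B, hB⟩ : ∃ B : ℕ, d * m ^ 2 = B := Int.eq_ofNat_of_zero_le (by positivity)
  have hBpos : 0 < B := by
    rw [← Int.natCast_pos, ← hB]
    positivity
  have hBodd : Odd B := by
    rw [← Int.odd_coe_nat, ← hB]
    exact hdodd.mul him.pow
  have hN : 4 * q ^ 2 + B = p ^ c := by
    rw [Zsqrtd.norm_def] at hγ
    zify
    rw [← hB, ← hγ]
    ring
  rw [pow_eq_rescale (B := -(B : ℤ)) (by rw [← hB, neg_mul])] at h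
  exact eq_one_of_re_pow_dvd hp hpodd hq hqodd hpq hBpos hBodd hN ht h

theorem eq_one_of_abs_re_pow_eq (hd : 0 < d) (hdodd : Odd d) (hp : p.Prime) (hpodd : Odd p)
    (hq : q.Prime) (hqodd : Odd q) (hpq : p ≠ q) (hγ : γ.norm = (p : ℤ) ^ c)
    (hre : 2 * (q : ℤ) ∣ γ.re) (him : Odd γ.im) {t : ℕ} (ht : Odd t)
    (h : |(γ ^ t).re| = 2 * q) : t = 1 := by
  have hdvd : (γ ^ t).re ∣ 2 * q := h ▸ (dvd_abs _ _).mpr dvd_rfl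
  have hassoc := associated_of_dvd_dvd ((re_dvd_re_pow γ ht).trans hdvd) hre
  rcases Int.associated_iff.mp hassoc with heq | hneg
  · exact eq_one_of_re_eq_of_re_pow_dvd hd hdodd hp hpodd hq hqodd hpq hγ heq him ht hdvd
  · refine eq_one_of_re_eq_of_re_pow_dvd (γ := -γ) hd hdodd hp hpodd hq hqodd hpq
      (by rw [Zsqrtd.norm_neg, hγ]) (by rw [Zsqrtd.re_neg, hneg, neg_neg])
      (by rw [Zsqrtd.im_neg]; exact him.neg) ht ?_
    rw [ht.neg_pow, Zsqrtd.re_neg]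
    exact hdvd.neg_left

theorem eq_of_abs_re_pow_eq (hd : 0 < d) (hdodd : Odd d) (hp : p.Prime) (hpodd : Odd p)
    (hq : q.Prime) (hqodd : Odd q) (hpq : p ≠ q) (hα : α.norm = (p : ℤ) ^ c)
    (hre : Even α.re) (him : Odd α.im) {m n : ℕ} (hm : Odd m) (hn : Odd n)
    (hrem : |(α ^ m).re| = 2 * q) (hren : |(α ^ n).re| = 2 * q) : m = n := by
  have hqZ : Odd (q : ℤ) := by exact_mod_cast hqodd
  have hqprime : Prime (q : ℤ) := Nat.prime_iff_prime_int.mp hq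
  have hdvd {k : ℕ} (h : |(α ^ k).re| = 2 * q) : (q : ℤ) ∣ (α ^ k).re :=
    (dvd_abs _ _).mp (h ▸ dvd_mul_left _ _)
  have hcop : IsCoprime (q : ℤ) α.norm := by
    rw [hα]
    exact ((Nat.coprime_primes hq hp).mpr hpq.symm).isCoprime.pow_right
  have hgodd : Odd (m.gcd n) := hm.of_dvd_nat (m.gcd_dvd_left n)
  have hgre : Even (α ^ m.gcd n).re := by
    rwa [← Int.not_odd_iff_even, odd_re_pow_iff hdodd.neg hre him, Nat.not_even_iff_odd]
  have hgdvd : 2 * (q : ℤ) ∣ (α ^ m.gcd n).re :=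
    (Int.isCoprime_two_left.mpr hqZ).mul_dvd hgre.two_dvd
      (dvd_re_pow_gcd hqprime (not_dvd_two_of_odd hqprime hqZ) hcop hm hn (hdvd hrem) (hdvd hren))
  have heq_gcd {k : ℕ} (hk : Odd k) (hgk : m.gcd n ∣ k) (h : |(α ^ k).re| = 2 * q) :
      k = m.gcd n := by
    obtain ⟨t, rfl⟩ := hgk
    rw [pow_mul] at h
    rw [eq_one_of_abs_re_pow_eq hd hdodd hp hpodd hq hqodd hpq (c := c * m.gcd n)
      (by rw [zsqrtd_norm_pow, hα, pow_mul]) hgdvd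
      ((odd_im_pow_iff hdodd.neg hre him).mpr hgodd) (Nat.odd_mul.mp hk).2 h, mul_one]
  rw [heq_gcd hm (m.gcd_dvd_left n) hrem, ← heq_gcd hn (m.gcd_dvd_right n) hren]

end ExponentUnique

section EvenGenerator

theorem exists_norm_eq_pow_forall_re_eq {d p : ℤ} (hp : Prime p) (hp2 : ¬ p ∣ 2)
    (hex : ∃ b, 0 < b ∧ ∃ β : ℤ√d, β.norm = p ^ b ∧ ¬ p ∣ β.re) :
    ∃ (α : ℤ√d) (a : ℕ), α.norm = p ^ a ∧
      ∀ b, 0 < b → ∀ β : ℤ√d, β.norm = p ^ b → ¬ p ∣ β.re →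
        ∃ (ε : ℤ√d) (n : ℕ), ε.norm = 1 ∧ (ε * α ^ n).re = β.re ∧ b = a * n := by
  obtain ⟨α, a, hα, hgen⟩ := exists_norm_eq_pow_forall_eq_mul_pow hp hp2 hex
  refine ⟨α, a, hα, fun b hb β hβ hpβ => ?_⟩
  have hinj := Int.pow_right_injective (Int.prime_iff_natAbs_prime.mp hp).one_lt
  obtain ⟨ε, n, hε, rfl | rfl⟩ := hgen b hb β hβ hpβ
  · refine ⟨ε, n + 1, hε, rfl, hinj ?_⟩
    simp only [← hβ, Zsqrtd.norm_mul, hε, one_mul, zsqrtd_norm_pow, hα, pow_mul]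
  · refine ⟨star ε, n + 1, by rw [Zsqrtd.norm_conj, hε], ?_, hinj ?_⟩
    · rw [← Zsqrtd.re_star, star_mul', star_star, star_pow]
    · simp only [← hβ, Zsqrtd.norm_mul, hε, one_mul, zsqrtd_norm_pow, Zsqrtd.norm_conj, hα,
        pow_mul]

variable {d : ℤ}

theorem even_re_odd_im_or_odd_re_even_im (hd : Odd d) {z : ℤ√(-d)} (hz : Odd z.norm) :
    (Even z.re ∧ Odd z.im) ∨ (Odd z.re ∧ Even z.im) := by
  rw [Zsqrtd.norm_def, Int.odd_sub, Int.odd_mul, and_self, Int.even_mul, Int.even_mul,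
    even_neg, ← Int.not_odd_iff_even] at hz
  simp only [← Int.not_odd_iff_even, hd, not_true_eq_false, false_or, or_self] at hz ⊢
  tauto

/-- If `α` has odd real part, then `d = 1` and `α` is replaced by `√(-1) α`. -/
theorem exists_even_re_odd_im (hd : 0 < d) (hdodd : Odd d) {α : ℤ√(-d)} (hα : Odd α.norm)
    (hex : ∃ (ε : ℤ√(-d)) (n : ℕ), ε.norm = 1 ∧ Even (ε * α ^ n).re) :
    ∃ α' : ℤ√(-d), α'.norm = α.norm ∧ Even α'.re ∧ Odd α'.im ∧
      ∀ (ε : ℤ√(-d)) (n : ℕ), ε.norm = 1 → ∃ ε', ε'.norm = 1 ∧ ε' * α' ^ n = ε * α ^ n := by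
  rcases even_re_odd_im_or_odd_re_even_im hdodd hα with ⟨hre, him⟩ | ⟨hre, him⟩
  · exact ⟨α, rfl, hre, him, fun ε n hε => ⟨ε, hε, rfl⟩⟩
  obtain rfl | hd1 := eq_or_ne d 1
  · have hi : (⟨0, 1⟩ : ℤ√(-1)).norm = 1 := rfl
    refine ⟨⟨0, 1⟩ * α, by rw [Zsqrtd.norm_mul, hi, one_mul], ?_, ?_, fun ε n hε => ?_⟩
    · rw [Zsqrtd.re_mul]
      simpa using him
    · rw [Zsqrtd.im_mul]
      simpa using hre
    · refine ⟨ε * star ⟨0, 1⟩ ^ n, ?_, ?_⟩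
      · rw [Zsqrtd.norm_mul, hε, zsqrtd_norm_pow, Zsqrtd.norm_conj, hi, one_pow, one_mul]
      · have hstar : star (⟨0, 1⟩ : ℤ√(-1)) * ⟨0, 1⟩ = 1 := rfl
        rw [mul_pow, mul_assoc, ← mul_assoc (star _ ^ n), ← mul_pow, hstar, one_pow, one_mul]
  · obtain ⟨ε, n, hε, heven⟩ := hex
    have hodd := (odd_re_even_im_pow hre him n).1
    rcases eq_of_norm_eq_one hd hε with (rfl | rfl) | ⟨h1, -⟩
    · exact (Int.not_even_iff_odd.mpr hodd (by rwa [one_mul] at heven)).elim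
    · rw [neg_one_mul, Zsqrtd.re_neg, even_neg] at heven
      exact (Int.not_even_iff_odd.mpr hodd heven).elim
    · exact (hd1 h1).elim

theorem abs_re_mul_eq_or (hd : 0 < d) {ε : ℤ√(-d)} (hε : ε.norm = 1) (z : ℤ√(-d)) :
    |(ε * z).re| = |z.re| ∨ |(ε * z).re| = |z.im| := by
  rcases eq_of_norm_eq_one hd hε with (rfl | rfl) | ⟨rfl, hre, him⟩
  · exact Or.inl (by rw [one_mul])
  · exact Or.inl (by rw [neg_one_mul, Zsqrtd.re_neg, abs_neg])
  · right
    rw [Zsqrtd.re_mul, hre]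
    rcases him with him | him <;> simp [him]

theorem four_dvd_im_pow (hd : Odd d) {z : ℤ√d} (hre : Even z.re) (him : Odd z.im) {n : ℕ}
    (hn : Even n) : 4 ∣ (z ^ n).im := by
  obtain ⟨k, rfl⟩ := hn
  have heven : Even ((z ^ k).re * (z ^ k).im) := by
    rw [← Int.not_odd_iff_even, Int.odd_mul, odd_re_pow_iff hd hre him,
      odd_im_pow_iff hd hre him, ← Nat.not_even_iff_odd]
    exact and_not_self
  have him_add : (z ^ (k + k)).im = 2 * ((z ^ k).re * (z ^ k).im) := by
    rw [pow_add, Zsqrtd.im_mul]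
    ring
  rw [him_add]
  exact mul_dvd_mul_left 2 heven.two_dvd

theorem odd_and_abs_re_pow_eq (hd : 0 < d) (hdodd : Odd d) {q : ℤ} (hq : Odd q)
    {α ε : ℤ√(-d)} (hre : Even α.re) (him : Odd α.im) (hε : ε.norm = 1) {n : ℕ}
    (h : |(ε * α ^ n).re| = 2 * q) : Odd n ∧ |(α ^ n).re| = 2 * q := by
  rcases abs_re_mul_eq_or hd hε (α ^ n) with habs | habs
  · have habs_re : |(α ^ n).re| = 2 * q := habs ▸ h
    refine ⟨?_, habs_re⟩
    rw [← Nat.not_even_iff_odd, ← odd_re_pow_iff hdodd.neg hre him, Int.not_odd_iff_even,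
      ← even_abs, habs_re]
    exact even_two_mul q
  · have habs_im : |(α ^ n).im| = 2 * q := habs ▸ h
    have hn : Even n := by
      rw [← Nat.not_odd_iff_even, ← odd_im_pow_iff hdodd.neg hre him, Int.not_odd_iff_even,
        ← even_abs, habs_im]
      exact even_two_mul q
    have hdvd : (4 : ℤ) ∣ 2 * q :=
      habs_im ▸ (dvd_abs _ _).mpr (four_dvd_im_pow hdodd.neg hre him hn)
    obtain ⟨k, rfl⟩ := hq
    omega

theorem exists_even_generator {p q d : ℕ} (hp : p.Prime) (hpodd : Odd p) (hq : q.Prime)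
    (hpq : p ≠ q) (hd : 0 < d) (hdodd : Odd d)
    (hex : ∃ x y, 0 < y ∧ d * x ^ 2 + 4 * q ^ 2 = p ^ y) :
    ∃ (α : ℤ√(-(d : ℤ))) (a : ℕ), α.norm = (p : ℤ) ^ a ∧ Even α.re ∧ Odd α.im ∧
      ∀ x y, 0 < y → d * x ^ 2 + 4 * q ^ 2 = p ^ y →
        ∃ (ε : ℤ√(-(d : ℤ))) (n : ℕ), ε.norm = 1 ∧ (ε * α ^ n).re = 2 * q ∧ y = a * n := by
  have hpZ : Prime (p : ℤ) := Nat.prime_iff_prime_int.mp hp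
  have hp2 : ¬ (p : ℤ) ∣ 2 := not_dvd_two_of_odd hpZ (by exact_mod_cast hpodd)
  have hp2q : ¬ (p : ℤ) ∣ 2 * q := fun h => (hpZ.dvd_or_dvd h).elim hp2 fun h =>
    hpq ((Nat.prime_dvd_prime_iff_eq hp hq).mp (Int.natCast_dvd_natCast.mp h))
  have hnorm (x y : ℕ) (h : d * x ^ 2 + 4 * q ^ 2 = p ^ y) :
      (⟨2 * q, x⟩ : ℤ√(-(d : ℤ))).norm = (p : ℤ) ^ y := by
    zify at h
    rw [Zsqrtd.norm_def, ← h]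
    ring
  obtain ⟨x, y, hy, h⟩ := hex
  obtain ⟨α, a, hα, hgen⟩ :=
    exists_norm_eq_pow_forall_re_eq hpZ hp2 ⟨y, hy, _, hnorm x y h, hp2q⟩
  have hαodd : Odd α.norm := by
    rw [hα]
    exact_mod_cast hpodd.pow
  obtain ⟨ε, n, hε, hεre, -⟩ := hgen y hy _ (hnorm x y h) hp2q
  obtain ⟨α', hα', hre, him, hgen'⟩ := exists_even_re_odd_im (by exact_mod_cast hd)
    (by exact_mod_cast hdodd) hαodd ⟨ε, n, hε, hεre ▸ even_two_mul _⟩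
  refine ⟨α', a, hα'.trans hα, hre, him, fun x y hy h => ?_⟩
  obtain ⟨ε, n, hε, hεre, hyn⟩ := hgen y hy _ (hnorm x y h) hp2q
  obtain ⟨ε', hε', hmul⟩ := hgen' ε n hε
  exact ⟨ε', n, hε', hmul ▸ hεre, hyn⟩

end EvenGenerator

/-- Let `p` and `q6` be distinct odd prime numbers and let `d1` be a positive odd integer.
Then there is at most one pair of positive integers `(x, y)` satisfying
`d1·x^2 + 4·q6^2 = p^y`. -/
theorem stmt_17 (p q6 : ℕ) (hp : p.Prime) (hq6 : q6.Prime) (hpodd : Odd p) (hqodd : Odd q6)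
    (hne : p ≠ q6) (d1 : ℕ) (hd1 : 0 < d1) (hodd : Odd d1) :
    {xy : ℕ × ℕ | 0 < xy.1 ∧ 0 < xy.2 ∧ d1 * xy.1 ^ 2 + 4 * q6 ^ 2 = p ^ xy.2}.Subsingleton := by
  rintro ⟨x₁, y₁⟩ ⟨-, hy₁, h₁⟩ ⟨x₂, y₂⟩ ⟨-, hy₂, h₂⟩
  dsimp only at hy₁ h₁ hy₂ h₂
  have hd : (0 : ℤ) < d1 := by exact_mod_cast hd1
  have hdodd : Odd (d1 : ℤ) := by exact_mod_cast hodd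
  have hqZ : Odd (q6 : ℤ) := by exact_mod_cast hqodd
  obtain ⟨α, a, hα, hre, him, hsol⟩ :=
    exists_even_generator hp hpodd hq6 hne hd1 hodd ⟨x₁, y₁, hy₁, h₁⟩
  have hodd_abs {n : ℕ} {ε : ℤ√(-(d1 : ℤ))} (hε : ε.norm = 1) (h : (ε * α ^ n).re = 2 * q6) :=
    odd_and_abs_re_pow_eq hd hdodd hqZ hre him hε (by rw [h, abs_of_nonneg]; positivity)
  obtain ⟨ε₁, n₁, hε₁, hn₁, rfl⟩ := hsol x₁ y₁ hy₁ h₁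
  obtain ⟨ε₂, n₂, hε₂, hn₂, rfl⟩ := hsol x₂ y₂ hy₂ h₂
  obtain ⟨hn₁odd, habs₁⟩ := hodd_abs hε₁ hn₁
  obtain ⟨hn₂odd, habs₂⟩ := hodd_abs hε₂ hn₂
  obtain rfl : n₁ = n₂ := eq_of_abs_re_pow_eq hd hdodd hp hpodd hq6 hqodd hne hα hre him
    hn₁odd hn₂odd habs₁ habs₂
  have hx : d1 * x₁ ^ 2 = d1 * x₂ ^ 2 := Nat.add_right_cancel (h₁.trans h₂.symm)
  rw [Nat.pow_left_injective two_ne_zero (Nat.eq_of_mul_eq_mul_left hd1 hx)]
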